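/- Let Q be an ergodic CP-distribution on ℝ² and π ∈ G(2,1) with dim πQ = dim Q − κ for some κ > 0. Then for Q-a.e. μ and μ-a.e. x, the conditional measure μ_{π^{−1}(π(x))} is exact dimensional with dim μ_{π^{−1}(π(x))} = κ. -/

import Mathlib

/-!
Write `M` for the magnification operator and `π` for the projection, and let `μ_y` be the fiber
measures of `μ` over `π`. By Besicovitch differentiation, `μ_{π x}(D_n(x))` is the limit, as
`r → 0`, of the conditional mass of `D_n(x)` in the strip of points whose projection is `r`-close
to `π x` (`ae_tendsto_ratio`). Magnification maps strips to strips, so these conditional masses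
form a multiplicative cocycle over `M` (`ratio_succ`), and in the limit `-log μ_{π x}(D_n(x))` is
the Birkhoff sum of the conditional information `limInfo` (`ae_fiberKernel_dcell`). The ergodic
theorem (`ae_tendsto_birkhoff`) then shows that the fiber measures have local dimension
`(∫ limInfo dQ) / log 2` along dyadic cells, and dyadic local dimensions are genuine ones almost
everywhere (`exactDim_of_dyadic`).

It remains to see that `∫ limInfo dQ = (dim Q - dim πQ) log 2` (`integral_limInfo`). Keeping the
radius comparable to `2⁻ⁿ` instead of sending it to zero, the same cocycle identity gives
`-log (μ(D_n(x)) / πμ(B(π x, 4 · 2⁻ⁿ))) = ∑_{k < n} info (n - k) (M^k (μ, x))`, where `info m` is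
the information at scale `4 · 2⁻ᵐ`. The left side divided by `n` tends to
`(dim Q - dim πQ) log 2`. A covering argument bounds the reciprocal strip ratios in `L¹(Q)`
uniformly in `m` (`lintegral_inv_ratio_le`), so the functions `info m` are bounded in `L²(Q)` and
converge to `limInfo` in `L¹(Q)`; replacing `info (n - k)` by `limInfo` therefore does not change
the limit of the averages (`maker_limit_eq`).
-/

open MeasureTheory Set Filter
open scoped ENNReal Classical

noncomputable section

/-- A measure is exact dimensional with dimension `d`. -/
def ExactDim {X : Type*} [PseudoMetricSpace X] [MeasurableSpace X]
    (μ : Measure X) (d : ℝ) : Prop :=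
  ∀ᵐ x ∂μ, Tendsto (fun r : ℝ => Real.log (μ (Metric.ball x r)).toReal / Real.log r)
    (nhdsWithin 0 (Set.Ioi 0)) (nhds d)

/-- The half-open dyadic cell of generation `k` containing `x`. -/
def dcell {d : ℕ} (k : ℕ) (x : Fin d → ℝ) : Set (Fin d → ℝ) :=
  {y | ∀ i, ⌊(2 : ℝ) ^ k * y i⌋ = ⌊(2 : ℝ) ^ k * x i⌋}

/-- The homothety mapping the generation-`k` dyadic cell of `x` onto `[0,1)^d`. -/
def dscale {d : ℕ} (k : ℕ) (x : Fin d → ℝ) : (Fin d → ℝ) → (Fin d → ℝ) :=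
  fun y i => (2 : ℝ) ^ k * y i - ⌊(2 : ℝ) ^ k * x i⌋

/-- The component `μ^{D_k(x)}`: the normalized restriction of `μ` to the generation-`k` dyadic
cell of `x`, rescaled to the unit cube. -/
def component {d : ℕ} (μ : Measure (Fin d → ℝ)) (k : ℕ) (x : Fin d → ℝ) :
    Measure (Fin d → ℝ) :=
  (μ (dcell k x))⁻¹ • (μ.restrict (dcell k x)).map (dscale k x)

/-- The component `μ^{D_k(x)}` as a probability measure (with a junk value in the degenerate
case `μ(D_k(x)) ∈ {0, ∞}`). -/
def componentP {d : ℕ} (μ : Measure (Fin d → ℝ)) (k : ℕ) (x : Fin d → ℝ) :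
    ProbabilityMeasure (Fin d → ℝ) :=
  if h : IsProbabilityMeasure (component μ k x) then ⟨component μ k x, h⟩
  else ⟨Measure.dirac 0, by infer_instance⟩

/-- The σ-algebra on the space of probability measures inherited from the evaluation
σ-algebra on the space of measures. -/
instance {Ω : Type*} [MeasurableSpace Ω] : MeasurableSpace (ProbabilityMeasure Ω) :=
  inferInstanceAs (MeasurableSpace {μ : Measure Ω // IsProbabilityMeasure μ})

/-- The unit cube `[0,1)^d`. -/
def unitCube (d : ℕ) : Set (Fin d → ℝ) := {y | ∀ i, 0 ≤ y i ∧ y i < 1}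

/-- The magnification operator `M(μ, x) = (μ^{D_1(x)}, S_{D_1(x)}(x))`. -/
def CPmag {d : ℕ} :
    ProbabilityMeasure (Fin d → ℝ) × (Fin d → ℝ) →
      ProbabilityMeasure (Fin d → ℝ) × (Fin d → ℝ) :=
  fun p => (componentP (p.1 : Measure (Fin d → ℝ)) 1 p.2, dscale 1 p.2 p.2)

/-- A CP-distribution: a probability distribution on pairs (measure on the unit cube, point of
the unit cube) that is invariant under magnification and adapted (the point component is
distributed according to the measure component). -/
def IsCPDist {d : ℕ}
    (Q : Measure (ProbabilityMeasure (Fin d → ℝ) × (Fin d → ℝ))) : Prop :=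
  IsProbabilityMeasure Q ∧
    (∀ᵐ p ∂Q, (p.1 : Measure (Fin d → ℝ)) (unitCube d) = 1 ∧ p.2 ∈ unitCube d) ∧
    Q.map CPmag = Q ∧
    Q = (Q.map Prod.fst).bind fun ν => (ν : Measure (Fin d → ℝ)).map fun x => (ν, x)

/-- Ergodicity of the magnification system `(P([0,1)^d) × [0,1)^d, Q, M)`. -/
def CPErgodic {d : ℕ}
    (Q : Measure (ProbabilityMeasure (Fin d → ℝ) × (Fin d → ℝ))) : Prop :=
  ∀ S : Set (ProbabilityMeasure (Fin d → ℝ) × (Fin d → ℝ)),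
    MeasurableSet S → CPmag ⁻¹' S = S → Q S = 0 ∨ Q S = 1

/-- The orthogonal projection of the plane onto the line of angle `θ`, identified with `ℝ`. -/
def projDir (θ : ℝ) (x : Fin 2 → ℝ) : ℝ := x 0 * Real.cos θ + x 1 * Real.sin θ

/-- `cond` is a disintegration of `μ` over the projection `projDir θ`: the fiber measures are
probability measures supported on the fibers, and they integrate back to `μ`. -/
def IsDisint (μ : Measure (Fin 2 → ℝ)) (θ : ℝ) (cond : ℝ → Measure (Fin 2 → ℝ)) : Prop :=
  (∀ᵐ y ∂(μ.map (projDir θ)),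
      IsProbabilityMeasure (cond y) ∧ cond y {z | projDir θ z ≠ y} = 0) ∧
    ∀ E : Set (Fin 2 → ℝ), MeasurableSet E →
      μ E = ∫⁻ y, cond y E ∂(μ.map (projDir θ))

/-! ### The pointwise ergodic theorem -/

/-- The running maximum `max_{0 ≤ k ≤ n} S_k g` of the Birkhoff sums of `g` (with `S_0 = 0`), in
recursive form. -/
def birkhoffMax {Ω : Type*} (T : Ω → Ω) (g : Ω → ℝ) : ℕ → Ω → ℝ
  | 0 => fun _ => 0
  | n + 1 => fun x => max 0 (g x + birkhoffMax T g n (T x))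

lemma birkhoffMax_nonneg {Ω : Type*} (T : Ω → Ω) (g : Ω → ℝ) (n : ℕ) (x : Ω) :
    0 ≤ birkhoffMax T g n x := by
  cases n <;> simp [birkhoffMax]

lemma birkhoffMax_mono {Ω : Type*} (T : Ω → Ω) (g : Ω → ℝ) (n : ℕ) (x : Ω) :
    birkhoffMax T g n x ≤ birkhoffMax T g (n + 1) x := by
  induction n generalizing x with
  | zero => simp [birkhoffMax]
  | succ n ih =>
    rw [birkhoffMax, birkhoffMax]
    exact max_le_max le_rfl (by linarith [ih (T x)])

lemma birkhoffSum_le_birkhoffMax {Ω : Type*} (T : Ω → Ω) (g : Ω → ℝ) (n : ℕ) (x : Ω) :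
    birkhoffSum T g n x ≤ birkhoffMax T g n x := by
  induction n generalizing x with
  | zero => simp [birkhoffMax]
  | succ n ih =>
    rw [birkhoffSum_succ', birkhoffMax]
    exact le_max_of_le_right (by linarith [ih (T x)])

lemma integrable_birkhoffMax {Ω : Type*} [MeasurableSpace Ω] {Q : Measure Ω} {T : Ω → Ω}
    (hT : MeasurePreserving T Q Q) {g : Ω → ℝ} (hg : Integrable g Q) (n : ℕ) :
    Integrable (birkhoffMax T g n) Q := by
  induction n with
  | zero => exact integrable_zero _ _ _
  | succ n ih =>
    exact (integrable_zero _ _ _).sup (hg.add (hT.integrable_comp_of_integrable ih))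

lemma measurable_birkhoffMax {Ω : Type*} [MeasurableSpace Ω] {T : Ω → Ω}
    (hT : Measurable T) {g : Ω → ℝ} (hg : Measurable g) (n : ℕ) :
    Measurable (birkhoffMax T g n) := by
  induction n with
  | zero => exact measurable_const
  | succ n ih => exact measurable_const.max (hg.add (ih.comp hT))

/-- If `g` has negative mean then its Birkhoff sums are almost surely bounded above. The set where
the running maxima are unbounded is strictly invariant; were it of full measure, the identity
`max_{n+1} - max_n ∘ T = max (-max_n ∘ T) g` and dominated convergence would give `0 ≤ ∫ g`. -/
lemma ae_birkhoffSum_bddAbove {Ω : Type*} [MeasurableSpace Ω] {Q : Measure Ω}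
    [IsProbabilityMeasure Q] {T : Ω → Ω} (hT : MeasurePreserving T Q Q)
    (herg : ∀ S : Set Ω, MeasurableSet S → T ⁻¹' S = S → Q S = 0 ∨ Q S = 1)
    {g : Ω → ℝ} (hgm : Measurable g) (hg : Integrable g Q) (hneg : ∫ x, g x ∂Q < 0) :
    ∀ᵐ x ∂Q, ∃ C : ℝ, ∀ n, birkhoffSum T g n x ≤ C := by
  set A : Set Ω := {x | ∀ N : ℕ, ∃ n, (N : ℝ) < birkhoffMax T g n x} with hA
  have hmono : ∀ x, Monotone fun n => birkhoffMax T g n x := fun x =>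
    monotone_nat_of_le_succ fun n => birkhoffMax_mono T g n x
  have hAm : MeasurableSet A := by
    have : A = ⋂ N : ℕ, ⋃ n, {x | (N : ℝ) < birkhoffMax T g n x} := by ext; simp [hA]
    rw [this]
    exact MeasurableSet.iInter fun N => MeasurableSet.iUnion fun n =>
      measurableSet_lt measurable_const (measurable_birkhoffMax hT.measurable hgm n)
  have hAinv : T ⁻¹' A = A := by
    ext x
    simp only [hA, mem_preimage, mem_ofPred_eq]
    constructor
    · intro h N
      obtain ⟨k, hk⟩ := exists_nat_ge (N - g x)
      obtain ⟨n, hn⟩ := h k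
      exact ⟨n + 1, lt_max_of_lt_right (by linarith)⟩
    · intro h N
      obtain ⟨k, hk⟩ := exists_nat_ge (max 0 (N + g x))
      obtain ⟨n, hn⟩ := h k
      have h0 : max 0 (g x + birkhoffMax T g n (T x)) > k := hn.trans_le (birkhoffMax_mono T g n x)
      rcases lt_max_iff.1 h0 with h1 | h1
      · exact absurd h1 (not_lt.2 (Nat.cast_nonneg k))
      · exact ⟨n, by linarith [le_max_right 0 (N + g x)]⟩
  rcases herg A hAm hAinv with h0 | h1
  · have : ∀ᵐ x ∂Q, x ∉ A := measure_eq_zero_iff_ae_notMem.1 h0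
    filter_upwards [this] with x hx
    simp only [hA, mem_ofPred_eq, not_forall, not_exists, not_lt] at hx
    obtain ⟨N, hN⟩ := hx
    exact ⟨N, fun n => (birkhoffSum_le_birkhoffMax T g n x).trans (hN n)⟩
  · exfalso
    have hae : ∀ᵐ x ∂Q, x ∈ A := (prob_compl_eq_zero_iff hAm).2 h1
    have hlim : Tendsto (fun n => ∫ x, max (-birkhoffMax T g n (T x)) (g x) ∂Q) atTop
        (nhds (∫ x, g x ∂Q)) := by
      refine tendsto_integral_of_dominated_convergence (fun x => |g x|) (fun n => ?_) hg.abs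
        (fun n => ?_) ?_
      · exact (((measurable_birkhoffMax hT.measurable hgm n).comp hT.measurable).neg.max
          hgm).aestronglyMeasurable
      · refine Eventually.of_forall fun x => ?_
        rw [Real.norm_eq_abs, abs_le]
        have := birkhoffMax_nonneg T g n (T x)
        exact ⟨(neg_abs_le _).trans (le_max_right _ _),
          max_le (by linarith [abs_nonneg (g x)]) (le_abs_self _)⟩
      · filter_upwards [hae] with x hx
        have hx' : T x ∈ A := by rw [← hAinv] at hx; exact hx
        obtain ⟨N, hN⟩ := exists_nat_ge (-g x)
        obtain ⟨n, hn⟩ := hx' N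
        refine tendsto_const_nhds.congr' ?_
        filter_upwards [eventually_ge_atTop n] with m hm
        rw [max_eq_right]
        linarith [hmono (T x) hm]
    have hpos : ∀ n, 0 ≤ ∫ x, max (-birkhoffMax T g n (T x)) (g x) ∂Q := by
      intro n
      have e : ∀ x, max (-birkhoffMax T g n (T x)) (g x)
          = birkhoffMax T g (n + 1) x - birkhoffMax T g n (T x) := by
        intro x
        rw [birkhoffMax, ← max_sub_sub_right]
        simp
      simp_rw [e]
      have i1 := integrable_birkhoffMax hT hg n
      have i2 := integrable_birkhoffMax hT hg (n + 1)
      have i3 : Integrable (fun x => birkhoffMax T g n (T x)) Q := hT.integrable_comp_of_integrable i1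
      rw [integral_sub i2 i3]
      have e2 : ∫ x, birkhoffMax T g n (T x) ∂Q = ∫ x, birkhoffMax T g n x ∂Q := by
        conv_rhs => rw [← hT.map_eq]
        rw [integral_map hT.measurable.aemeasurable
          (measurable_birkhoffMax hT.measurable hgm n).aestronglyMeasurable]
      rw [e2, sub_nonneg]
      exact integral_mono i1 i2 fun x => birkhoffMax_mono T g n x
    exact absurd (ge_of_tendsto' hlim hpos) (not_le.2 hneg)

/-- One half of the pointwise ergodic theorem. -/
lemma ae_eventually_birkhoff_le {Ω : Type*} [MeasurableSpace Ω] {Q : Measure Ω}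
    [IsProbabilityMeasure Q] {T : Ω → Ω} (hT : MeasurePreserving T Q Q)
    (herg : ∀ S : Set Ω, MeasurableSet S → T ⁻¹' S = S → Q S = 0 ∨ Q S = 1)
    {g : Ω → ℝ} (hgm : Measurable g) (hg : Integrable g Q) :
    ∀ᵐ x ∂Q, ∀ ε > 0, ∀ᶠ n : ℕ in atTop,
      birkhoffSum T g n x / n < ∫ x, g x ∂Q + ε := by
  have key : ∀ᵐ x ∂Q, ∀ j : ℕ, ∃ C : ℝ, ∀ n,
      birkhoffSum T (fun x => g x - (∫ x, g x ∂Q + 1 / ((j : ℝ) + 1))) n x ≤ C := by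
    rw [ae_all_iff]
    intro j
    refine ae_birkhoffSum_bddAbove hT herg (hgm.sub measurable_const)
      (hg.sub (integrable_const _)) ?_
    rw [integral_sub hg (integrable_const _)]
    simp only [integral_const, probReal_univ, smul_eq_mul, one_mul]
    have : (0 : ℝ) < 1 / ((j : ℝ) + 1) := Nat.one_div_pos_of_nat
    linarith
  filter_upwards [key] with x hx ε hε
  obtain ⟨j, hj⟩ := exists_nat_one_div_lt (half_pos hε)
  obtain ⟨C, hC⟩ := hx j
  have ht : Tendsto (fun n : ℕ => C / (n : ℝ)) atTop (nhds 0) :=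
    tendsto_const_div_atTop_nhds_zero_nat C
  filter_upwards [ht.eventually (gt_mem_nhds (half_pos hε)), eventually_gt_atTop 0] with n hn hn0
  have hn' : (0 : ℝ) < n := by exact_mod_cast hn0
  have h1 := hC n
  simp only [birkhoffSum, Finset.sum_sub_distrib, Finset.sum_const, Finset.card_range,
    nsmul_eq_mul] at h1 ⊢
  rw [div_lt_iff₀ hn'] at hn ⊢
  nlinarith

/-- The pointwise ergodic theorem, for a transformation whose strictly invariant sets are
trivial. -/
lemma ae_tendsto_birkhoff {Ω : Type*} [MeasurableSpace Ω] {Q : Measure Ω}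
    [IsProbabilityMeasure Q] {T : Ω → Ω} (hT : MeasurePreserving T Q Q)
    (herg : ∀ S : Set Ω, MeasurableSet S → T ⁻¹' S = S → Q S = 0 ∨ Q S = 1)
    {g : Ω → ℝ} (hgm : Measurable g) (hg : Integrable g Q) :
    ∀ᵐ x ∂Q, Tendsto (fun n : ℕ => birkhoffSum T g n x / n) atTop (nhds (∫ x, g x ∂Q)) := by
  filter_upwards [ae_eventually_birkhoff_le hT herg hgm hg,
    ae_eventually_birkhoff_le hT herg hgm.neg hg.neg] with x h1 h2
  rw [tendsto_order]
  refine ⟨fun a ha => ?_, fun a ha => ?_⟩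
  · filter_upwards [h2 (∫ x, g x ∂Q - a) (by linarith)] with n hn
    have e : birkhoffSum T (-g) n x = - birkhoffSum T g n x := by simp [birkhoffSum]
    rw [e, neg_div] at hn
    simp only [Pi.neg_apply, integral_neg] at hn
    linarith
  · filter_upwards [h1 (a - ∫ x, g x ∂Q) (by linarith)] with n hn
    linarith

/-! ### Local dimension along dyadic cells -/

/-- Averaged comparison of a cell with its neighbourhood. The space is partitioned by a label `c`,
essentially valued in the finite set `t`, and by a lattice label `q`; the integrand compares the
mass of the `q`-neighbours (differences in `s`) with the mass of the joint cell. Integrating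
cancels the denominator, and each lattice cell is counted at most `#t * #s` times. -/
lemma lintegral_nbr_le {X G H : Type*} [MeasurableSpace X] [AddCommGroup G] [Countable G]
    [MeasurableSpace G] [MeasurableSingletonClass G] [Countable H] [MeasurableSpace H]
    [MeasurableSingletonClass H] (ν : Measure X) [IsFiniteMeasure ν] {c : X → H} {q : X → G}
    (hc : Measurable c) (hq : Measurable q) (t : Finset H) (s : Finset G)
    (ht : ∀ᵐ x ∂ν, c x ∈ t) :
    ∫⁻ x, ν {z | q z - q x ∈ s} / ν {z | c z = c x ∧ q z = q x} ∂ν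
      ≤ (t.card : ℝ≥0∞) * ((s.card : ℝ≥0∞) * ν univ) := by
  set Φ : H × G → ℝ≥0∞ := fun p => ν {z | q z - p.2 ∈ s} / ν {z | c z = p.1 ∧ q z = p.2} with hΦ
  have hcq : Measurable fun x => (c x, q x) := hc.prodMk hq
  have h1 : ∫⁻ x, ν {z | q z - q x ∈ s} / ν {z | c z = c x ∧ q z = q x} ∂ν
      = ∑' p : H × G, Φ p * ν {z | c z = p.1 ∧ q z = p.2} := by
    calc _ = ∫⁻ x, Φ (c x, q x) ∂ν := rfl
      _ = ∫⁻ p, Φ p ∂(ν.map fun x => (c x, q x)) :=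
        (lintegral_map (Measurable.of_discrete) hcq).symm
      _ = _ := by
        rw [lintegral_countable']
        congr 1
        ext p
        rw [Measure.map_apply hcq (measurableSet_singleton p)]
        congr 2
        ext z
        simp [Prod.ext_iff]
  rw [h1]
  have h2 : ∀ p : H × G, Φ p * ν {z | c z = p.1 ∧ q z = p.2}
      ≤ (if p.1 ∈ t then 1 else 0) * ν {z | q z - p.2 ∈ s} := by
    intro p
    by_cases hp : p.1 ∈ t
    · simp only [hp, if_true, one_mul, hΦ]
      exact ENNReal.mul_le_of_le_div le_rfl
    · have : ν {z | c z = p.1 ∧ q z = p.2} = 0 := by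
        refine measure_mono_null ?_ (ae_iff.1 ht)
        rintro z ⟨hz, -⟩
        simpa [hz] using hp
      simp [this]
  refine (ENNReal.tsum_le_tsum h2).trans ?_
  rw [ENNReal.tsum_prod (f := fun (a : H) (j : G) =>
    (if a ∈ t then (1 : ℝ≥0∞) else 0) * ν {z | q z - j ∈ s})]
  simp_rw [ENNReal.tsum_mul_left, ENNReal.tsum_mul_right]
  have h3 : ∑' a : H, (if a ∈ t then (1 : ℝ≥0∞) else 0) = t.card := by
    rw [tsum_eq_sum (s := t) (by intro b hb; simp [hb])]
    simp
  rw [h3]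
  gcongr
  have h4 : ∀ j : G, ν {z | q z - j ∈ s} ≤ ∑ e ∈ s, ν (q ⁻¹' {e + j}) := by
    intro j
    refine (measure_mono ?_).trans (measure_biUnion_finset_le s fun e => q ⁻¹' {e + j})
    intro z hz
    simp only [mem_iUnion, mem_preimage, mem_singleton_iff]
    exact ⟨q z - j, hz, by abel⟩
  calc ∑' j, ν {z | q z - j ∈ s} ≤ ∑' j, ∑ e ∈ s, ν (q ⁻¹' {e + j}) := ENNReal.tsum_le_tsum h4
    _ = ∑ e ∈ s, ∑' j, ν (q ⁻¹' {e + j}) := Summable.tsum_finsetSum fun _ _ => ENNReal.summable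
    _ = ∑ e ∈ s, ν univ := by
      refine Finset.sum_congr rfl fun e _ => ?_
      refine ((Equiv.addLeft e).tsum_eq (fun j => ν (q ⁻¹' {j}))).trans ?_
      rw [← measure_iUnion]
      · congr 1
        ext z
        simp
      · intro i j hij
        exact Disjoint.preimage _ (by simpa using hij)
      · exact fun j => hq (measurableSet_singleton j)
    _ = _ := by simp

lemma ae_cell_ne_zero {X G : Type*} [MeasurableSpace X] [Countable G] (ν : Measure X) (q : X → G) :
    ∀ᵐ x ∂ν, ν {z | q z = q x} ≠ 0 := by
  rw [ae_iff]
  have : {x | ¬ ν {z | q z = q x} ≠ 0} = ⋃ j : {j : G // ν {z | q z = j} = 0}, {z | q z = j.1} := by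
    ext x
    simp
  rw [this]
  exact measure_iUnion_null fun j => j.2

/-- The index of the dyadic cell of generation `n` containing `x`. -/
def dindex {d : ℕ} (n : ℕ) (x : Fin d → ℝ) : Fin d → ℤ := fun i => ⌊(2 : ℝ) ^ n * x i⌋

lemma dcell_eq {d : ℕ} (n : ℕ) (x : Fin d → ℝ) : dcell n x = {z | dindex n z = dindex n x} := by
  ext z
  simp [dcell, dindex, funext_iff]

lemma measurable_dindex {d : ℕ} (n : ℕ) : Measurable (dindex (d := d) n) := by
  refine measurable_pi_iff.2 fun i => Int.measurable_floor.comp ?_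
  fun_prop

lemma abs_sub_lt_of_mem_dcell {d : ℕ} {n : ℕ} {x y : Fin d → ℝ} (h : y ∈ dcell n x) (i : Fin d) :
    |y i - x i| < (2⁻¹ : ℝ) ^ n := by
  have h1 := Int.abs_sub_lt_one_of_floor_eq_floor (h i)
  rw [← mul_sub, abs_mul, abs_of_pos (by positivity)] at h1
  rw [inv_pow, ← one_div, lt_div_iff₀ (by positivity)]
  linarith

lemma ball_subset_nbr {d : ℕ} (n : ℕ) (x : Fin d → ℝ) {r : ℝ} (hr : r ≤ (2⁻¹ : ℝ) ^ n) :
    Metric.ball x r ⊆ {z | dindex n z - dindex n x ∈ Finset.Icc (-1 : Fin d → ℤ) 1} := by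
  intro z hz
  have hz' : ∀ i, |z i - x i| < r := fun i => by
    have := (dist_le_pi_dist z x i).trans_lt (Metric.mem_ball.1 hz)
    rwa [Real.dist_eq] at this
  have hb : ∀ i, |2 ^ n * z i - 2 ^ n * x i| ≤ 1 := fun i => by
    have h2 : (0 : ℝ) < 2 ^ n := by positivity
    rw [← mul_sub, abs_mul, abs_of_pos h2]
    calc (2 : ℝ) ^ n * |z i - x i| ≤ 2 ^ n * (2⁻¹ : ℝ) ^ n := by
          gcongr; exact (hz' i).le.trans hr
      _ = 1 := by rw [← mul_pow]; norm_num
  simp only [mem_ofPred_eq, Finset.mem_Icc]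
  constructor
  · intro i
    have := (abs_le.1 (hb i)).1
    have h3 : ⌊(2 : ℝ) ^ n * x i⌋ ≤ ⌊(2 : ℝ) ^ n * z i⌋ + 1 := by
      rw [← Int.floor_add_one]; exact Int.floor_le_floor (by linarith)
    simp only [Pi.neg_apply, Pi.one_apply, Pi.sub_apply, dindex]
    linarith
  · intro i
    have := (abs_le.1 (hb i)).2
    have h3 : ⌊(2 : ℝ) ^ n * z i⌋ ≤ ⌊(2 : ℝ) ^ n * x i⌋ + 1 := by
      rw [← Int.floor_add_one]; exact Int.floor_le_floor (by linarith)
    simp only [Pi.one_apply, Pi.sub_apply, dindex]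
    linarith

lemma tendsto_floor_div {u : ℕ → ℝ} {L : ℝ} (hu : Tendsto (fun n : ℕ => u n / n) atTop (nhds L)) :
    Tendsto (fun t : ℝ => u ⌊t⌋₊ / t) atTop (nhds L) := by
  have h1 := (hu.comp (tendsto_nat_floor_atTop (α := ℝ))).mul (tendsto_nat_floor_div_atTop (R := ℝ))
  rw [mul_one] at h1
  refine h1.congr' ?_
  filter_upwards [eventually_ge_atTop 1] with t ht
  have : (0 : ℝ) < ⌊t⌋₊ := by exact_mod_cast Nat.floor_pos.2 ht
  simp only [Function.comp]
  field_simp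

lemma tendsto_succ_div {u : ℕ → ℝ} {L : ℝ} (hu : Tendsto (fun n : ℕ => u n / n) atTop (nhds L)) :
    Tendsto (fun n : ℕ => u (n + 1) / n) atTop (nhds L) := by
  have h2 : Tendsto (fun n : ℕ => (1 : ℝ) + 1 / (n : ℝ)) atTop (nhds (1 + 0)) :=
    tendsto_const_nhds.add (tendsto_const_div_atTop_nhds_zero_nat 1)
  have h1 := ((tendsto_add_atTop_iff_nat 1).2 hu).mul h2
  rw [add_zero, mul_one] at h1
  refine h1.congr' ?_
  filter_upwards [eventually_gt_atTop 0] with n hn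
  have : (0 : ℝ) < n := by exact_mod_cast hn
  push_cast
  field_simp

/-- Almost surely the neighbourhood of a dyadic cell carries at most polynomially more mass than
the cell itself, since the expected ratio is bounded uniformly in the generation. -/
lemma ae_nbr_le {d : ℕ} (ν : Measure (Fin d → ℝ)) [IsProbabilityMeasure ν] :
    ∀ᵐ x ∂ν, ∃ C : ℝ, 0 < C ∧ ∀ n,
      ν.real {z | dindex n z - dindex n x ∈ Finset.Icc (-1 : Fin d → ℤ) 1}
        ≤ C * ((n : ℝ) + 1) ^ 2 * ν.real (dcell n x) := by
  set s : Finset (Fin d → ℤ) := Finset.Icc (-1) 1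
  set w : ℕ → ℝ≥0∞ := fun n => ENNReal.ofReal (1 / ((n : ℝ) + 1) ^ 2) with hw
  set R : ℕ → (Fin d → ℝ) → ℝ≥0∞ := fun n x =>
    ν {z | dindex n z - dindex n x ∈ s} / ν {z | dindex n z = dindex n x} with hR
  have hRm : ∀ n, Measurable (R n) := fun n =>
    (Measurable.of_discrete (f := fun j : Fin d → ℤ =>
      ν {z | dindex n z - j ∈ s} / ν {z | dindex n z = j})).comp (measurable_dindex n)
  have hRi : ∀ n, ∫⁻ x, R n x ∂ν ≤ s.card := by
    intro n
    have := lintegral_nbr_le ν (c := fun _ => ()) measurable_const (measurable_dindex n)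
      {()} s (by simp)
    simpa using this
  have hws : ∑' n, w n ≠ ∞ := by
    refine Summable.tsum_ofReal_ne_top ?_
    have := (summable_nat_add_iff 1).2 (Real.summable_one_div_nat_pow (p := 2).2 (by norm_num))
    simpa using this
  have hfin : ∫⁻ x, ∑' n, w n * R n x ∂ν ≠ ∞ := by
    rw [lintegral_tsum fun n => ((hRm n).const_mul _).aemeasurable]
    refine ne_top_of_le_ne_top (ENNReal.mul_ne_top hws (ENNReal.natCast_ne_top s.card)) ?_
    rw [← ENNReal.tsum_mul_right]
    refine ENNReal.tsum_le_tsum fun n => ?_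
    rw [lintegral_const_mul _ (hRm n)]
    gcongr
    exact hRi n
  have hae := ae_lt_top (Measurable.tsum fun n => (hRm n).const_mul (w n)) hfin
  have hpos : ∀ᵐ x ∂ν, ∀ n, ν {z | dindex n z = dindex n x} ≠ 0 :=
    ae_all_iff.2 fun n => ae_cell_ne_zero ν (dindex n)
  filter_upwards [hae, hpos] with x hx hp
  refine ⟨(∑' n, w n * R n x).toReal + 1, by positivity, fun n => ?_⟩
  have h1 : w n * R n x ≤ ∑' n, w n * R n x := ENNReal.le_tsum n
  have h2 := ENNReal.toReal_mono hx.ne h1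
  have hw' : (w n).toReal = 1 / ((n : ℝ) + 1) ^ 2 := ENNReal.toReal_ofReal (by positivity)
  have hp' : 0 < ν.real {z | dindex n z = dindex n x} :=
    ENNReal.toReal_pos (hp n) (measure_ne_top _ _)
  rw [ENNReal.toReal_mul, hw', hR, ENNReal.toReal_div] at h2
  rw [dcell_eq]
  change 1 / ((n : ℝ) + 1) ^ 2 * (ν.real {z | dindex n z - dindex n x ∈ s} /
    ν.real {z | dindex n z = dindex n x}) ≤ _ at h2
  rw [div_mul_div_comm, one_mul, div_le_iff₀ (by positivity)] at h2
  refine h2.trans ?_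
  rw [mul_assoc]
  gcongr
  linarith

/-- Local dimension can be computed along dyadic cells. -/
lemma exactDim_of_dyadic {d : ℕ} (ν : Measure (Fin d → ℝ)) [IsProbabilityMeasure ν] (L : ℝ)
    (h : ∀ᵐ x ∂ν, Tendsto (fun n : ℕ => -Real.log (ν.real (dcell n x)) / n) atTop (nhds L)) :
    ExactDim ν (L / Real.log 2) := by
  have hpos : ∀ᵐ x ∂ν, ∀ n, ν {z | dindex n z = dindex n x} ≠ 0 :=
    ae_all_iff.2 fun n => ae_cell_ne_zero ν (dindex n)
  filter_upwards [h, ae_nbr_le ν, hpos] with x hx hC hp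
  obtain ⟨C, hC0, hC⟩ := hC
  have hl2 : 0 < Real.log 2 := Real.log_pos one_lt_two
  have hp' : ∀ n, 0 < ν.real (dcell n x) := fun n => by
    rw [dcell_eq]; exact ENNReal.toReal_pos (hp n) (measure_ne_top _ _)
  set N : ℕ → ℝ := fun n => ν.real {z | dindex n z - dindex n x ∈ Finset.Icc (-1 : Fin d → ℤ) 1}
  have hDN : ∀ n, ν.real (dcell n x) ≤ N n := by
    intro n
    refine measureReal_mono ?_
    rw [dcell_eq]
    intro z hz
    have hz : dindex n z = dindex n x := hz
    simp only [mem_ofPred_eq, hz, sub_self, Finset.mem_Icc]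
    constructor <;> intro i <;> simp
  have hlogN : Tendsto (fun n : ℕ => -Real.log (N n) / n) atTop (nhds L) := by
    have hlow : Tendsto (fun n : ℕ => -Real.log (ν.real (dcell n x)) / n
        - (Real.log C / n + 2 * (Real.log ((n + 1 : ℕ) : ℝ) / n))) atTop
        (nhds (L - (0 + 2 * 0))) := by
      refine hx.sub (Tendsto.add (tendsto_const_div_atTop_nhds_zero_nat _)
        (Tendsto.const_mul _ ?_))
      refine tendsto_succ_div (u := fun n : ℕ => Real.log (n : ℝ)) ?_
      exact (Real.isLittleO_log_id_atTop.tendsto_div_nhds_zero).comp tendsto_natCast_atTop_atTop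
    rw [mul_zero, add_zero, sub_zero] at hlow
    refine tendsto_of_tendsto_of_tendsto_of_le_of_le hlow hx (fun n => ?_) (fun n => ?_)
    · have h1 := Real.log_le_log ((hp' n).trans_le (hDN n)) (hC n)
      have hn : (0 : ℝ) < n + 1 := by positivity
      rw [Real.log_mul (by positivity) (hp' n).ne', Real.log_mul (by positivity) (by positivity),
        Real.log_pow] at h1
      simp only
      rw [← mul_div_assoc, ← add_div, ← sub_div]
      gcongr
      push_cast at h1 ⊢
      linarith
    · simp only
      gcongr
      exacts [hp' n, hDN n]
  have ht : Tendsto (fun r : ℝ => -Real.log r / Real.log 2) (nhdsWithin 0 (Ioi 0)) atTop :=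
    (tendsto_neg_atBot_atTop.comp Real.tendsto_log_nhdsGT_zero).atTop_div_const hl2
  have hu := ((tendsto_floor_div (u := fun n => -Real.log (ν.real (dcell (n + 1) x)))
    (tendsto_succ_div (u := fun n => -Real.log (ν.real (dcell n x))) hx)).comp ht).div_const
      (Real.log 2)
  have hl := ((tendsto_floor_div (u := fun n => -Real.log (N n)) hlogN).comp ht).div_const
      (Real.log 2)
  have hsmall : ∀ᶠ r : ℝ in nhdsWithin 0 (Ioi 0), 0 < r ∧ r < 1 := by
    filter_upwards [Ioo_mem_nhdsGT (zero_lt_one (α := ℝ))] with r hr using hr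
  have hb : ∀ r : ℝ, 0 < r → r < 1 → r ≤ (2⁻¹ : ℝ) ^ ⌊-Real.log r / Real.log 2⌋₊ ∧
      (2⁻¹ : ℝ) ^ (⌊-Real.log r / Real.log 2⌋₊ + 1) ≤ r := by
    intro r hr0 hr1
    have hlr := Real.log_neg hr0 hr1
    have hnn : 0 ≤ -Real.log r / Real.log 2 := div_nonneg (by linarith) hl2.le
    constructor
    · rw [← Real.log_le_log_iff hr0 (by positivity), Real.log_pow, Real.log_inv]
      have := Nat.floor_le hnn
      rw [le_div_iff₀ hl2] at this
      linarith
    · rw [← Real.log_le_log_iff (by positivity) hr0, Real.log_pow, Real.log_inv]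
      have := (Nat.lt_floor_add_one (-Real.log r / Real.log 2)).le
      rw [div_le_iff₀ hl2] at this
      push_cast
      linarith
  refine tendsto_of_tendsto_of_tendsto_of_le_of_le' hl hu ?_ ?_
  · filter_upwards [hsmall] with r ⟨hr0, hr1⟩
    have hlr := Real.log_neg hr0 hr1
    obtain ⟨b1, b2⟩ := hb r hr0 hr1
    have hsub : dcell (⌊-Real.log r / Real.log 2⌋₊ + 1) x ⊆ Metric.ball x r := fun z hz => by
      rw [Metric.mem_ball, dist_pi_lt_iff hr0]
      exact fun i => (abs_sub_lt_of_mem_dcell hz i).trans_le b2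
    have hB : 0 < ν.real (Metric.ball x r) := (hp' _).trans_le (measureReal_mono hsub)
    have hBN : ν.real (Metric.ball x r) ≤ N ⌊-Real.log r / Real.log 2⌋₊ :=
      measureReal_mono (ball_subset_nbr _ x b1)
    have := Real.log_le_log hB hBN
    simp only [Function.comp]
    rw [div_div, div_mul_cancel₀ _ hl2.ne', neg_div_neg_eq]
    exact div_le_div_of_nonpos_of_le hlr.le this
  · filter_upwards [hsmall] with r ⟨hr0, hr1⟩
    have hlr := Real.log_neg hr0 hr1
    obtain ⟨b1, b2⟩ := hb r hr0 hr1
    have hsub : dcell (⌊-Real.log r / Real.log 2⌋₊ + 1) x ⊆ Metric.ball x r := fun z hz => by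
      rw [Metric.mem_ball, dist_pi_lt_iff hr0]
      exact fun i => (abs_sub_lt_of_mem_dcell hz i).trans_le b2
    have := Real.log_le_log (hp' _) (measureReal_mono (μ := ν) hsub)
    simp only [Function.comp]
    rw [div_div, div_mul_cancel₀ _ hl2.ne', neg_div_neg_eq]
    exact div_le_div_of_nonpos_of_le hlr.le this

/-! ### Measurability and adaptedness -/

lemma measurable_pm_coe {d : ℕ} :
    Measurable fun ν : ProbabilityMeasure (Fin d → ℝ) => (ν : Measure (Fin d → ℝ)) :=
  measurable_subtype_coe

/-- Evaluating `μ` on a set depending measurably on a parameter is jointly measurable. -/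
lemma measurable_eval {d : ℕ} {Y : Type*} [MeasurableSpace Y]
    {f : Y → ProbabilityMeasure (Fin d → ℝ)} (hf : Measurable f)
    {t : Set (Y × (Fin d → ℝ))} (ht : MeasurableSet t) :
    Measurable fun p : Y => (f p : Measure (Fin d → ℝ)) (Prod.mk p ⁻¹' t) := by
  let K : ProbabilityTheory.Kernel Y (Fin d → ℝ) :=
    ⟨fun p => (f p : Measure (Fin d → ℝ)), measurable_pm_coe.comp hf⟩
  have : ProbabilityTheory.IsMarkovKernel K := ⟨fun p => (f p).2⟩
  exact ProbabilityTheory.Kernel.measurable_kernel_prodMk_left (κ := K) ht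

lemma measurableSet_dcell {d : ℕ} (n : ℕ) (x : Fin d → ℝ) : MeasurableSet (dcell n x) := by
  rw [dcell_eq]
  exact measurable_dindex n (measurableSet_singleton _)

lemma measurableSet_dcell_prod {d : ℕ} (n : ℕ) :
    MeasurableSet {q : (ProbabilityMeasure (Fin d → ℝ) × (Fin d → ℝ)) × (Fin d → ℝ) |
      q.2 ∈ dcell n q.1.2} := by
  simp_rw [dcell_eq]
  exact measurableSet_eq_fun ((measurable_dindex n).comp measurable_snd)
    ((measurable_dindex n).comp (measurable_snd.comp measurable_fst))

lemma measurable_dscale {d : ℕ} (n : ℕ) (x : Fin d → ℝ) : Measurable (dscale n x) := by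
  refine measurable_pi_iff.2 fun i => ?_
  unfold dscale
  fun_prop

lemma measurable_dscale_prod {d : ℕ} (n : ℕ) :
    Measurable fun q : (Fin d → ℝ) × (Fin d → ℝ) => dscale n q.1 q.2 := by
  refine measurable_pi_iff.2 fun i => ?_
  unfold dscale
  refine Measurable.sub (by fun_prop) ?_
  have : Measurable fun q : (Fin d → ℝ) × (Fin d → ℝ) => ⌊(2 : ℝ) ^ n * q.1 i⌋ :=
    Int.measurable_floor.comp (by fun_prop)
  exact (Measurable.of_discrete (f := fun j : ℤ => (j : ℝ))).comp this

lemma component_apply {d : ℕ} (μ : Measure (Fin d → ℝ)) (n : ℕ) (x : Fin d → ℝ)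
    {s : Set (Fin d → ℝ)} (hs : MeasurableSet s) :
    component μ n x s = (μ (dcell n x))⁻¹ * μ (dscale n x ⁻¹' s ∩ dcell n x) := by
  rw [component, Measure.smul_apply, Measure.map_apply (measurable_dscale n x) hs,
    Measure.restrict_apply (measurable_dscale n x hs), smul_eq_mul]

lemma isProbabilityMeasure_component {d : ℕ} (μ : Measure (Fin d → ℝ)) [IsProbabilityMeasure μ]
    (n : ℕ) (x : Fin d → ℝ) :
    IsProbabilityMeasure (component μ n x) ↔ μ (dcell n x) ≠ 0 := by
  rw [isProbabilityMeasure_iff, component_apply _ _ _ MeasurableSet.univ, preimage_univ, univ_inter]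
  constructor
  · intro h h0
    simp [h0] at h
  · intro h
    exact ENNReal.inv_mul_cancel h (measure_ne_top _ _)

lemma coe_componentP {d : ℕ} (μ : Measure (Fin d → ℝ)) [IsProbabilityMeasure μ]
    (n : ℕ) (x : Fin d → ℝ) :
    (componentP μ n x : Measure (Fin d → ℝ)) =
      if μ (dcell n x) = 0 then Measure.dirac 0 else component μ n x := by
  by_cases h : μ (dcell n x) = 0
  · have hn : ¬ IsProbabilityMeasure (component μ n x) := by
      rw [isProbabilityMeasure_component]; simpa using h
    rw [if_pos h]
    exact congrArg Subtype.val (dif_neg hn)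
  · rw [if_neg h]
    exact congrArg Subtype.val (dif_pos ((isProbabilityMeasure_component μ n x).2 h))

lemma measurable_CPmag {d : ℕ} : Measurable (CPmag (d := d)) := by
  refine Measurable.prodMk ?_ ?_
  · refine measurable_comap_iff.2 ?_
    have e : (fun p : ProbabilityMeasure (Fin d → ℝ) × (Fin d → ℝ) =>
        (componentP (p.1 : Measure (Fin d → ℝ)) 1 p.2 : Measure (Fin d → ℝ))) = fun p =>
        if (p.1 : Measure (Fin d → ℝ)) (dcell 1 p.2) = 0 then Measure.dirac 0
          else component (p.1 : Measure (Fin d → ℝ)) 1 p.2 := by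
      ext1 p
      exact coe_componentP _ _ _
    change Measurable fun p : ProbabilityMeasure (Fin d → ℝ) × (Fin d → ℝ) =>
        (componentP (p.1 : Measure (Fin d → ℝ)) 1 p.2 : Measure (Fin d → ℝ))
    rw [e]
    have hD : Measurable fun p : ProbabilityMeasure (Fin d → ℝ) × (Fin d → ℝ) =>
        (p.1 : Measure (Fin d → ℝ)) (dcell 1 p.2) :=
      measurable_eval measurable_fst (measurableSet_dcell_prod 1)
    refine Measurable.ite (hD (measurableSet_singleton 0)) measurable_const ?_
    refine Measure.measurable_of_measurable_coe _ fun s hs => ?_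
    simp_rw [component_apply _ _ _ hs]
    refine hD.inv.mul ?_
    have hs' : MeasurableSet {q : (ProbabilityMeasure (Fin d → ℝ) × (Fin d → ℝ)) × (Fin d → ℝ) |
        dscale 1 q.1.2 q.2 ∈ s ∧ q.2 ∈ dcell 1 q.1.2} :=
      (((measurable_dscale_prod 1).comp
        ((measurable_snd.comp measurable_fst).prodMk measurable_snd)) hs).inter
          (measurableSet_dcell_prod 1)
    exact measurable_eval measurable_fst hs'
  · exact (measurable_dscale_prod 1).comp (measurable_snd.prodMk measurable_snd)

lemma measurable_adapted_kernel {d : ℕ} :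
    Measurable fun ν : ProbabilityMeasure (Fin d → ℝ) =>
      (ν : Measure (Fin d → ℝ)).map fun x => (ν, x) := by
  refine Measure.measurable_of_measurable_coe _ fun s hs => ?_
  have : ∀ ν : ProbabilityMeasure (Fin d → ℝ),
      (ν : Measure (Fin d → ℝ)).map (fun x => (ν, x)) s
        = (ν : Measure (Fin d → ℝ)) (Prod.mk ν ⁻¹' s) :=
    fun ν => Measure.map_apply measurable_prodMk_left hs
  simp_rw [this]
  exact measurable_eval (f := fun ν => ν) measurable_id hs

/-- Adaptedness as an iterated integral. -/
lemma IsCPDist.lintegral_eq {d : ℕ} {Q : Measure (ProbabilityMeasure (Fin d → ℝ) × (Fin d → ℝ))}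
    (hQ : IsCPDist Q) {f : ProbabilityMeasure (Fin d → ℝ) × (Fin d → ℝ) → ℝ≥0∞}
    (hf : Measurable f) :
    ∫⁻ p, f p ∂Q = ∫⁻ p, ∫⁻ x, f (p.1, x) ∂(p.1 : Measure (Fin d → ℝ)) ∂Q := by
  have h1 : ∀ ν : ProbabilityMeasure (Fin d → ℝ),
      ∫⁻ q, f q ∂((ν : Measure (Fin d → ℝ)).map fun x => (ν, x))
        = ∫⁻ x, f (ν, x) ∂(ν : Measure (Fin d → ℝ)) :=
    fun ν => lintegral_map hf measurable_prodMk_left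
  have h2 : Measurable fun ν : ProbabilityMeasure (Fin d → ℝ) =>
      ∫⁻ x, f (ν, x) ∂(ν : Measure (Fin d → ℝ)) := by
    simp_rw [← h1]
    exact (Measure.measurable_lintegral hf).comp measurable_adapted_kernel
  conv_lhs => rw [hQ.2.2.2]
  rw [Measure.lintegral_bind measurable_adapted_kernel.aemeasurable hf.aemeasurable]
  simp_rw [h1]
  exact lintegral_map h2 measurable_fst

lemma IsCPDist.ae_ae {d : ℕ} {Q : Measure (ProbabilityMeasure (Fin d → ℝ) × (Fin d → ℝ))}
    (hQ : IsCPDist Q) {P : ProbabilityMeasure (Fin d → ℝ) × (Fin d → ℝ) → Prop}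
    (h : ∀ᵐ p ∂Q, P p) : ∀ᵐ p ∂Q, ∀ᵐ x ∂(p.1 : Measure (Fin d → ℝ)), P (p.1, x) := by
  rw [hQ.2.2.2] at h
  have h1 := Measure.ae_ae_of_ae_bind measurable_adapted_kernel.aemeasurable h
  filter_upwards [ae_of_ae_map measurable_fst.aemeasurable h1] with p hp
  exact ae_of_ae_map measurable_prodMk_left.aemeasurable hp

lemma IsCPDist.ae_of_ae_ae {d : ℕ} {Q : Measure (ProbabilityMeasure (Fin d → ℝ) × (Fin d → ℝ))}
    (hQ : IsCPDist Q) {P : ProbabilityMeasure (Fin d → ℝ) × (Fin d → ℝ) → Prop}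
    (hP : MeasurableSet {p | P p})
    (h : ∀ᵐ p ∂Q, ∀ᵐ x ∂(p.1 : Measure (Fin d → ℝ)), P (p.1, x)) : ∀ᵐ p ∂Q, P p := by
  rw [ae_iff]
  change Q {p | P p}ᶜ = 0
  rw [← lintegral_indicator_one hP.compl,
    hQ.lintegral_eq (measurable_one.indicator hP.compl), lintegral_eq_zero_iff']
  · filter_upwards [h] with p hp
    rw [Pi.zero_apply, lintegral_eq_zero_iff']
    · filter_upwards [hp] with x hx
      simp [hx]
    · exact ((measurable_one.indicator hP.compl).comp measurable_prodMk_left).aemeasurable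
  · have hm := measurable_one (α := ℝ≥0∞).indicator hP.compl
    have h2 : Measurable fun ν : ProbabilityMeasure (Fin d → ℝ) =>
        ∫⁻ x, ({p | P p}ᶜ).indicator 1 (ν, x) ∂(ν : Measure (Fin d → ℝ)) := by
      have h1 : ∀ ν : ProbabilityMeasure (Fin d → ℝ),
          ∫⁻ q, ({p | P p}ᶜ).indicator 1 q ∂((ν : Measure (Fin d → ℝ)).map fun x => (ν, x))
            = ∫⁻ x, ({p | P p}ᶜ).indicator 1 (ν, x) ∂(ν : Measure (Fin d → ℝ)) :=
        fun ν => lintegral_map hm measurable_prodMk_left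
      simp_rw [← h1]
      exact (Measure.measurable_lintegral hm).comp measurable_adapted_kernel
    exact (h2.comp measurable_fst).aemeasurable

/-! ### Strip ratios and their cocycle identity -/

/-- The part of the generation-`n` dyadic cell of `x` that projects `r`-close to `x`. -/
def strip (θ : ℝ) (n : ℕ) (r : ℝ) (x : Fin 2 → ℝ) : Set (Fin 2 → ℝ) :=
  {z | z ∈ dcell n x ∧ |projDir θ z - projDir θ x| ≤ r}

/-- The `μ`-mass of a strip around `x`, as a function of the pair `(μ, x)`. -/
def stripMass (θ : ℝ) (n : ℕ) (r : ℝ) (p : ProbabilityMeasure (Fin 2 → ℝ) × (Fin 2 → ℝ)) : ℝ≥0∞ :=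
  (p.1 : Measure (Fin 2 → ℝ)) (strip θ n r p.2)

/-- The radii `4 · 2⁻ᵐ`: the constant is large enough for the generation-`m` dyadic cell of `x` to
project into the ball of radius `rad m` around the projection of `x`. -/
def rad (m : ℕ) : ℝ := 4 * (2⁻¹ : ℝ) ^ m

/-- The conditional mass of the cell `D_n(x)` given the `rad m`-ball around the projection of `x`.
As `m → ∞` it converges to the mass of `D_n(x)` for the conditional measure on the fiber. -/
def ratio (θ : ℝ) (n m : ℕ) (p : ProbabilityMeasure (Fin 2 → ℝ) × (Fin 2 → ℝ)) : ℝ≥0∞ :=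
  stripMass θ n (rad m) p / stripMass θ 0 (rad m) p

lemma rad_pos (m : ℕ) : 0 < rad m := by unfold rad; positivity

lemma rad_succ (m : ℕ) : rad (m + 1) = rad m / 2 := by
  unfold rad; rw [pow_succ]; ring

lemma tendsto_rad : Tendsto rad atTop (nhdsWithin 0 (Ioi 0)) := by
  refine tendsto_nhdsWithin_iff.2 ⟨?_, Eventually.of_forall rad_pos⟩
  have := (tendsto_pow_atTop_nhds_zero_of_lt_one (r := (2⁻¹ : ℝ)) (by norm_num)
    (by norm_num)).const_mul 4
  rw [mul_zero] at this
  exact this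

lemma measurable_projDir (θ : ℝ) : Measurable (projDir θ) := by
  unfold projDir; fun_prop

lemma measurableSet_strip_prod (θ : ℝ) (n : ℕ) (r : ℝ) :
    MeasurableSet {q : (ProbabilityMeasure (Fin 2 → ℝ) × (Fin 2 → ℝ)) × (Fin 2 → ℝ) |
      q.2 ∈ strip θ n r q.1.2} := by
  have h2 : MeasurableSet {q : (ProbabilityMeasure (Fin 2 → ℝ) × (Fin 2 → ℝ)) × (Fin 2 → ℝ) |
      |projDir θ q.2 - projDir θ q.1.2| ≤ r} :=
    measurableSet_le (((measurable_projDir θ).comp measurable_snd).sub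
      ((measurable_projDir θ).comp (measurable_snd.comp measurable_fst))).abs measurable_const
  exact (measurableSet_dcell_prod n).inter h2

lemma measurableSet_strip (θ : ℝ) (n : ℕ) (r : ℝ) (x : Fin 2 → ℝ) :
    MeasurableSet (strip θ n r x) := by
  have h2 : MeasurableSet {z | |projDir θ z - projDir θ x| ≤ r} :=
    measurableSet_le ((measurable_projDir θ).sub measurable_const).abs measurable_const
  exact (measurableSet_dcell n x).inter h2

lemma measurable_stripMass (θ : ℝ) (n : ℕ) (r : ℝ) : Measurable (stripMass θ n r) :=
  measurable_eval measurable_fst (measurableSet_strip_prod θ n r)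

lemma measurable_ratio (θ : ℝ) (n m : ℕ) : Measurable (ratio θ n m) :=
  (measurable_stripMass θ n _).div (measurable_stripMass θ 0 _)

lemma stripMass_ne_top (θ : ℝ) (n : ℕ) (r : ℝ)
    (p : ProbabilityMeasure (Fin 2 → ℝ) × (Fin 2 → ℝ)) : stripMass θ n r p ≠ ∞ :=
  measure_ne_top _ _

lemma dcell_subset_of_le {d : ℕ} {m n : ℕ} (h : m ≤ n) (x : Fin d → ℝ) :
    dcell n x ⊆ dcell m x := by
  intro y hy i
  have e : ∀ t : ℝ, (2 : ℝ) ^ m * t = (2 : ℝ) ^ n * t / ((2 ^ (n - m) : ℕ) : ℝ) := by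
    intro t
    obtain ⟨k, rfl⟩ := Nat.exists_eq_add_of_le h
    rw [Nat.add_sub_cancel_left, pow_add]
    push_cast
    field_simp
  rw [e, e, Int.floor_div_natCast, Int.floor_div_natCast, hy i]

lemma strip_subset (θ : ℝ) {m n : ℕ} (h : m ≤ n) (r : ℝ) (x : Fin 2 → ℝ) :
    strip θ n r x ⊆ strip θ m r x :=
  fun _ hz => ⟨dcell_subset_of_le h x hz.1, hz.2⟩

lemma strip_rad (θ : ℝ) {m n : ℕ} (h : m ≤ n) (x : Fin 2 → ℝ) :
    strip θ n (rad m) x = dcell n x := by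
  refine Subset.antisymm (fun z hz => hz.1) fun z hz => ⟨hz, ?_⟩
  have h0 := (abs_sub_lt_of_mem_dcell (dcell_subset_of_le h x hz) 0).le
  have h1 := (abs_sub_lt_of_mem_dcell (dcell_subset_of_le h x hz) 1).le
  have e : projDir θ z - projDir θ x = (z 0 - x 0) * Real.cos θ + (z 1 - x 1) * Real.sin θ := by
    unfold projDir; ring
  rw [e]
  refine (abs_add_le _ _).trans ?_
  rw [abs_mul, abs_mul]
  have c1 := Real.abs_cos_le_one θ
  have s1 := Real.abs_sin_le_one θ
  have hp : (0 : ℝ) < (2⁻¹ : ℝ) ^ m := by positivity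
  have a0 : |z 0 - x 0| * |Real.cos θ| ≤ (2⁻¹ : ℝ) ^ m * 1 :=
    mul_le_mul h0 c1 (abs_nonneg _) hp.le
  have a1 : |z 1 - x 1| * |Real.sin θ| ≤ (2⁻¹ : ℝ) ^ m * 1 :=
    mul_le_mul h1 s1 (abs_nonneg _) hp.le
  unfold rad
  linarith

lemma ratio_le_one (θ : ℝ) (n m : ℕ) (p : ProbabilityMeasure (Fin 2 → ℝ) × (Fin 2 → ℝ)) :
    ratio θ n m p ≤ 1 := by
  refine ENNReal.div_le_of_le_mul ?_
  rw [one_mul]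
  exact measure_mono (strip_subset θ (Nat.zero_le n) _ _)

/-- Magnification turns the strips of `μ` into strips of the component: dyadic generations shift
by one and radii double. -/
lemma stripMass_CPmag (θ : ℝ) (n : ℕ) (r : ℝ)
    (p : ProbabilityMeasure (Fin 2 → ℝ) × (Fin 2 → ℝ))
    (hp : (p.1 : Measure (Fin 2 → ℝ)) (dcell 1 p.2) ≠ 0) :
    stripMass θ n r (CPmag p) =
      ((p.1 : Measure (Fin 2 → ℝ)) (dcell 1 p.2))⁻¹ * stripMass θ (n + 1) (r / 2) p := by
  have e : ((CPmag p).1 : Measure (Fin 2 → ℝ)) = component (p.1 : Measure (Fin 2 → ℝ)) 1 p.2 := by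
    change (componentP (p.1 : Measure (Fin 2 → ℝ)) 1 p.2 : Measure (Fin 2 → ℝ)) = _
    rw [coe_componentP, if_neg hp]
  unfold stripMass
  rw [e, component_apply _ _ _ (measurableSet_strip _ _ _ _)]
  congr 2
  change dscale 1 p.2 ⁻¹' strip θ n r (dscale 1 p.2 p.2) ∩ dcell 1 p.2 = _
  set x := p.2
  have hfl : ∀ (y : Fin 2 → ℝ) (i : Fin 2), ⌊(2 : ℝ) ^ n * dscale 1 x y i⌋
      = ⌊(2 : ℝ) ^ (n + 1) * y i⌋ - 2 ^ n * ⌊(2 : ℝ) ^ 1 * x i⌋ := by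
    intro y i
    rw [← Int.floor_sub_intCast]
    congr 1
    unfold dscale
    push_cast
    ring
  have hcell : ∀ z, dscale 1 x z ∈ dcell n (dscale 1 x x) ↔ z ∈ dcell (n + 1) x := by
    intro z
    unfold dcell
    simp only [mem_ofPred_eq, hfl, sub_left_inj]
  have hproj : ∀ z, projDir θ (dscale 1 x z) - projDir θ (dscale 1 x x)
      = 2 * (projDir θ z - projDir θ x) := by
    intro z
    simp only [projDir, dscale]
    ring
  ext z
  simp only [strip, mem_inter_iff, mem_preimage, mem_ofPred_eq, hcell, hproj, abs_mul]
  rw [abs_of_pos (zero_lt_two (α := ℝ)), le_div_iff₀ zero_lt_two, mul_comm (2 : ℝ)]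
  constructor
  · exact fun h => h.1
  · exact fun h => ⟨h, dcell_subset_of_le (Nat.le_add_left 1 n) x h.1⟩

lemma stripMass_ne_zero_of_ratio {θ : ℝ} {n m : ℕ}
    {p : ProbabilityMeasure (Fin 2 → ℝ) × (Fin 2 → ℝ)}
    (h : ratio θ n m p ≠ 0) : stripMass θ n (rad m) p ≠ 0 := by
  intro h0
  exact h (by simp [ratio, h0])

lemma dcell_ne_zero_of_ratio {θ : ℝ} {n m : ℕ}
    {p : ProbabilityMeasure (Fin 2 → ℝ) × (Fin 2 → ℝ)}
    (h : ratio θ n m p ≠ 0) : (p.1 : Measure (Fin 2 → ℝ)) (dcell n p.2) ≠ 0 := fun h0 =>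
  stripMass_ne_zero_of_ratio h (measure_mono_null (fun _ hz => hz.1) h0)

/-- The cocycle identity for strip ratios. -/
lemma ratio_succ {θ : ℝ} {n m : ℕ} {p : ProbabilityMeasure (Fin 2 → ℝ) × (Fin 2 → ℝ)}
    (h : ratio θ 1 (m + 1) p ≠ 0) :
    ratio θ (n + 1) (m + 1) p = ratio θ n m (CPmag p) * ratio θ 1 (m + 1) p := by
  have h1 := stripMass_ne_zero_of_ratio h
  have hw := dcell_ne_zero_of_ratio h
  have hw' : (p.1 : Measure (Fin 2 → ℝ)) (dcell 1 p.2) ≠ ∞ := measure_ne_top _ _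
  unfold ratio
  rw [stripMass_CPmag _ _ _ _ hw, stripMass_CPmag _ _ _ _ hw, ← rad_succ, zero_add,
    ENNReal.mul_div_mul_left _ _ (ENNReal.inv_ne_zero.2 hw') (ENNReal.inv_ne_top.2 hw)]
  rw [ENNReal.div_eq_inv_mul, ENNReal.div_eq_inv_mul, ENNReal.div_eq_inv_mul]
  calc _ = (stripMass θ 1 (rad (m + 1)) p * (stripMass θ 1 (rad (m + 1)) p)⁻¹) *
        ((stripMass θ 0 (rad (m + 1)) p)⁻¹ * stripMass θ (n + 1) (rad (m + 1)) p) := by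
        rw [ENNReal.mul_inv_cancel h1 (stripMass_ne_top _ _ _ _), one_mul]
    _ = _ := by ring

/-- All strip ratios of generation one are nonzero along the orbit of `p`. -/
def GoodOrbit (θ : ℝ) (p : ProbabilityMeasure (Fin 2 → ℝ) × (Fin 2 → ℝ)) : Prop :=
  ∀ k m, ratio θ 1 m (CPmag^[k] p) ≠ 0

lemma GoodOrbit.next {θ : ℝ} {p : ProbabilityMeasure (Fin 2 → ℝ) × (Fin 2 → ℝ)}
    (h : GoodOrbit θ p) : GoodOrbit θ (CPmag p) := fun k m => by
  rw [← Function.iterate_succ_apply]; exact h (k + 1) m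

lemma GoodOrbit.ratio_zero {θ : ℝ} {p : ProbabilityMeasure (Fin 2 → ℝ) × (Fin 2 → ℝ)}
    (h : GoodOrbit θ p) (m : ℕ) : ratio θ 0 m p = 1 := by
  have h1 := stripMass_ne_zero_of_ratio (h 0 m)
  refine ENNReal.div_self (fun h0 => h1 ?_) (stripMass_ne_top _ _ _ _)
  exact measure_mono_null (strip_subset θ (Nat.zero_le 1) _ _) h0

/-- The limit of the generation-one strip ratios. -/
def limRatio (θ : ℝ) (p : ProbabilityMeasure (Fin 2 → ℝ) × (Fin 2 → ℝ)) : ℝ≥0∞ :=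
  limsup (fun m => ratio θ 1 m p) atTop

lemma measurable_limRatio (θ : ℝ) : Measurable (limRatio θ) :=
  Measurable.limsup fun m => measurable_ratio θ 1 m

lemma limRatio_le_one (θ : ℝ) (p : ProbabilityMeasure (Fin 2 → ℝ) × (Fin 2 → ℝ)) :
    limRatio θ p ≤ 1 :=
  limsup_le_of_le (h := Eventually.of_forall fun m => ratio_le_one θ 1 m p)

/-- Letting the radius go to zero in the cocycle identity. -/
lemma GoodOrbit.tendsto_ratio {θ : ℝ} {p : ProbabilityMeasure (Fin 2 → ℝ) × (Fin 2 → ℝ)}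
    (h : GoodOrbit θ p)
    (hl : ∀ k, Tendsto (fun m => ratio θ 1 m (CPmag^[k] p)) atTop
      (nhds (limRatio θ (CPmag^[k] p)))) (n : ℕ) :
    Tendsto (fun m => ratio θ n m p) atTop
      (nhds (∏ k ∈ Finset.range n, limRatio θ (CPmag^[k] p))) := by
  induction n generalizing p with
  | zero => simp [h.ratio_zero]
  | succ n ih =>
    rw [← tendsto_add_atTop_iff_nat 1, Finset.prod_range_succ']
    have e : ∀ m, ratio θ (n + 1) (m + 1) p = ratio θ n m (CPmag p) * ratio θ 1 (m + 1) p :=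
      fun m => ratio_succ (h 0 (m + 1))
    simp_rw [e]
    have hne : ∀ q, limRatio θ q ≠ ∞ := fun q =>
      ne_top_of_le_ne_top ENNReal.one_ne_top (limRatio_le_one θ q)
    refine ENNReal.Tendsto.mul ?_ (Or.inr (hne _)) ((tendsto_add_atTop_iff_nat 1).2 (hl 0))
      (Or.inr ?_)
    · have := ih h.next fun k => by
        simpa only [Function.iterate_succ_apply] using hl (k + 1)
      simpa only [Function.iterate_succ_apply] using this
    · exact ENNReal.prod_ne_top fun k _ => hne _

/-- The information function at scale `rad m`. -/
def info (θ : ℝ) (m : ℕ) (p : ProbabilityMeasure (Fin 2 → ℝ) × (Fin 2 → ℝ)) : ℝ :=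
  -Real.log (ratio θ 1 m p).toReal

/-- The conditional information function given the projection. -/
def limInfo (θ : ℝ) (p : ProbabilityMeasure (Fin 2 → ℝ) × (Fin 2 → ℝ)) : ℝ :=
  -Real.log (limRatio θ p).toReal

lemma measurable_info (θ : ℝ) (m : ℕ) : Measurable (info θ m) :=
  (Real.measurable_log.comp (measurable_ratio θ 1 m).ennreal_toReal).neg

lemma measurable_limInfo (θ : ℝ) : Measurable (limInfo θ) :=
  (Real.measurable_log.comp (measurable_limRatio θ).ennreal_toReal).neg

lemma GoodOrbit.log_ratio_diag {θ : ℝ} {p : ProbabilityMeasure (Fin 2 → ℝ) × (Fin 2 → ℝ)}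
    (h : GoodOrbit θ p) (n : ℕ) :
    ratio θ n n p ≠ 0 ∧ -Real.log (ratio θ n n p).toReal
      = ∑ k ∈ Finset.range n, info θ (n - k) (CPmag^[k] p) := by
  induction n generalizing p with
  | zero => simp [h.ratio_zero]
  | succ n ih =>
    obtain ⟨i1, i2⟩ := ih h.next
    have h1 : ratio θ 1 (n + 1) p ≠ 0 := h 0 (n + 1)
    have hne : ∀ a b q, ratio θ a b q ≠ ∞ := fun a b q =>
      ne_top_of_le_ne_top ENNReal.one_ne_top (ratio_le_one θ a b q)
    rw [ratio_succ h1, Finset.sum_range_succ']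
    refine ⟨mul_ne_zero i1 h1, ?_⟩
    rw [ENNReal.toReal_mul, Real.log_mul (ENNReal.toReal_ne_zero.2 ⟨i1, hne _ _ _⟩)
      (ENNReal.toReal_ne_zero.2 ⟨h1, hne _ _ _⟩), neg_add, i2]
    simp [info, Function.iterate_succ_apply]

/-- The mass of dyadic cells is a multiplicative cocycle. -/
lemma GoodOrbit.log_dcell {θ : ℝ} {p : ProbabilityMeasure (Fin 2 → ℝ) × (Fin 2 → ℝ)}
    (h : GoodOrbit θ p)
    (hc : ∀ k, ((CPmag^[k] p).1 : Measure (Fin 2 → ℝ)) (dcell 0 (CPmag^[k] p).2) = 1) (n : ℕ) :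
    stripMass θ n (rad n) p ≠ 0 ∧ -Real.log (stripMass θ n (rad n) p).toReal
      = ∑ k ∈ Finset.range n, info θ 0 (CPmag^[k] p) := by
  induction n generalizing p with
  | zero =>
    have h0 := hc 0
    simp only [Function.iterate_zero, id] at h0
    simp [stripMass, strip_rad, h0]
  | succ n ih =>
    obtain ⟨i1, i2⟩ := ih h.next fun k => by
      simpa only [Function.iterate_succ_apply] using hc (k + 1)
    have hr : ratio θ 1 0 p ≠ 0 := h 0 0
    have hw := dcell_ne_zero_of_ratio hr
    have hw' : (p.1 : Measure (Fin 2 → ℝ)) (dcell 1 p.2) ≠ ∞ := measure_ne_top _ _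
    have e0 : ratio θ 1 0 p = (p.1 : Measure (Fin 2 → ℝ)) (dcell 1 p.2) := by
      have h0 := hc 0
      simp only [Function.iterate_zero, id] at h0
      simp [ratio, stripMass, strip_rad, h0]
    have e1 : stripMass θ (n + 1) (rad (n + 1)) p = ratio θ 1 0 p * stripMass θ n (rad n) (CPmag p) := by
      rw [stripMass_CPmag _ _ _ _ hw, e0, ← mul_assoc, ENNReal.mul_inv_cancel hw hw', one_mul,
        rad_succ]
    rw [e1, Finset.sum_range_succ']
    refine ⟨mul_ne_zero hr i1, ?_⟩
    rw [ENNReal.toReal_mul, Real.log_mul (ENNReal.toReal_ne_zero.2 ⟨hr, by rwa [e0]⟩)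
      (ENNReal.toReal_ne_zero.2 ⟨i1, stripMass_ne_top _ _ _ _⟩), neg_add, i2]
    simp [info, Function.iterate_succ_apply]
    ring

/-! ### Uniform integrability of the information functions -/

lemma dcell_zero_of_mem {x : Fin 2 → ℝ} (hx : x ∈ unitCube 2) : dcell 0 x = unitCube 2 := by
  ext z
  have h : ∀ i, ⌊(2 : ℝ) ^ 0 * x i⌋ = 0 := fun i => by
    rw [pow_zero, one_mul, Int.floor_eq_zero_iff]
    exact ⟨(hx i).1, (hx i).2⟩
  simp only [dcell, unitCube, mem_ofPred_eq, h]
  refine forall_congr' fun i => ?_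
  rw [pow_zero, one_mul, Int.floor_eq_zero_iff, mem_Ico]

/-- A bound, independent of the scale, for the integral of the reciprocal strip ratios: the ball of
radius `rad m` is covered by three intervals of length `rad m`, and the unit cube by four cells. -/
def ratioBound : ℝ≥0∞ :=
  ((Finset.Icc (0 : Fin 2 → ℤ) 1).card : ℝ≥0∞) * (((Finset.Icc (-1 : ℤ) 1).card : ℝ≥0∞) * 1)

lemma ratioBound_ne_top : ratioBound ≠ ∞ := by
  unfold ratioBound
  finiteness

lemma lintegral_inv_ratio_fiber_le (θ : ℝ) (m : ℕ) (μ : ProbabilityMeasure (Fin 2 → ℝ))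
    (hμ : (μ : Measure (Fin 2 → ℝ)) (unitCube 2) = 1) :
    ∫⁻ x, (ratio θ 1 m (μ, x))⁻¹ ∂(μ : Measure (Fin 2 → ℝ)) ≤ ratioBound := by
  set ν := (μ : Measure (Fin 2 → ℝ))
  set q : (Fin 2 → ℝ) → ℤ := fun z => ⌊projDir θ z / rad m⌋ with hq
  have hqm : Measurable q := Int.measurable_floor.comp ((measurable_projDir θ).div_const _)
  have hcube : ∀ᵐ x ∂ν, x ∈ unitCube 2 := mem_ae_iff_prob_eq_one₀ (by
    have : unitCube 2 = dcell 0 0 := (dcell_zero_of_mem (fun i => by simp)).symm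
    rw [this]
    exact (measurableSet_dcell 0 0).nullMeasurableSet) |>.2 hμ
  have ht : ∀ᵐ x ∂ν, dindex 1 x ∈ Finset.Icc (0 : Fin 2 → ℤ) 1 := by
    filter_upwards [hcube] with x hx
    rw [Finset.mem_Icc]
    refine ⟨fun i => ?_, fun i => ?_⟩
    · exact Int.floor_nonneg.2 (by have := (hx i).1; positivity)
    · refine Int.lt_add_one_iff.1 (Int.floor_lt.2 ?_)
      have := (hx i).2
      simp only [Pi.one_apply]
      push_cast
      linarith
  have key := lintegral_nbr_le ν (measurable_dindex 1) hqm (Finset.Icc (0 : Fin 2 → ℤ) 1)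
    (Finset.Icc (-1 : ℤ) 1) ht
  rw [measure_univ] at key
  refine (lintegral_mono_ae ?_).trans key
  filter_upwards [ae_cell_ne_zero ν (fun x => (dindex 1 x, q x))] with x hx
  simp only [Prod.mk.injEq] at hx
  have hr := rad_pos m
  have h1 : {z | dindex 1 z = dindex 1 x ∧ q z = q x} ⊆ strip θ 1 (rad m) x := by
    rintro z ⟨hz1, hz2⟩
    refine ⟨by rw [dcell_eq]; exact hz1, ?_⟩
    have := Int.abs_sub_lt_one_of_floor_eq_floor hz2
    rw [← sub_div, abs_div, abs_of_pos hr, div_lt_one hr] at this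
    exact this.le
  have h0 : strip θ 0 (rad m) x ⊆ {z | q z - q x ∈ Finset.Icc (-1 : ℤ) 1} := by
    rintro z ⟨-, hz⟩
    have hz' : |projDir θ z / rad m - projDir θ x / rad m| ≤ 1 := by
      rw [← sub_div, abs_div, abs_of_pos hr]
      exact (div_le_one hr).2 hz
    obtain ⟨ha, hb⟩ := abs_le.1 hz'
    simp only [mem_ofPred_eq, Finset.mem_Icc, hq]
    have e1 : ⌊projDir θ z / rad m⌋ ≤ ⌊projDir θ x / rad m⌋ + 1 := by
      rw [← Int.floor_add_one]
      exact Int.floor_mono (by linarith)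
    have e2 : ⌊projDir θ x / rad m⌋ ≤ ⌊projDir θ z / rad m⌋ + 1 := by
      rw [← Int.floor_add_one]
      exact Int.floor_mono (by linarith)
    constructor <;> linarith
  have hs1 : ν (strip θ 1 (rad m) x) ≠ 0 := fun h => hx (measure_mono_null h1 h)
  have e : (ratio θ 1 m (μ, x))⁻¹ = ν (strip θ 0 (rad m) x) / ν (strip θ 1 (rad m) x) :=
    ENNReal.inv_div (Or.inl (measure_ne_top _ _)) (Or.inr hs1)
  rw [e]
  exact ENNReal.div_le_div (measure_mono h0) (measure_mono h1)

variable {Q : Measure (ProbabilityMeasure (Fin 2 → ℝ) × (Fin 2 → ℝ))}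

lemma lintegral_inv_ratio_le (hQ : IsCPDist Q) (θ : ℝ) (m : ℕ) :
    ∫⁻ p, (ratio θ 1 m p)⁻¹ ∂Q ≤ ratioBound := by
  have := hQ.1
  rw [hQ.lintegral_eq (f := fun p => (ratio θ 1 m p)⁻¹) (measurable_ratio θ 1 m).inv]
  calc _ ≤ ∫⁻ _, ratioBound ∂Q := lintegral_mono_ae (by
        filter_upwards [hQ.2.1] with p hp using lintegral_inv_ratio_fiber_le θ m p.1 hp.1)
    _ = _ := by simp

lemma IsCPDist.measurePreserving (hQ : IsCPDist Q) : MeasurePreserving CPmag Q Q :=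
  ⟨measurable_CPmag, hQ.2.2.1⟩

/-- A property that holds almost surely holds almost surely along the whole orbit. -/
lemma IsCPDist.ae_orbit (hQ : IsCPDist Q) {P : ProbabilityMeasure (Fin 2 → ℝ) × (Fin 2 → ℝ) → Prop}
    (h : ∀ᵐ p ∂Q, P p) : ∀ᵐ p ∂Q, ∀ k, P (CPmag^[k] p) :=
  ae_all_iff.2 fun k => (hQ.measurePreserving.iterate k).quasiMeasurePreserving.ae h

lemma ae_ratio_ne_zero (hQ : IsCPDist Q) (θ : ℝ) (m : ℕ) : ∀ᵐ p ∂Q, ratio θ 1 m p ≠ 0 := by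
  have h := ae_lt_top (measurable_ratio θ 1 m).inv
    (ne_top_of_le_ne_top ratioBound_ne_top (lintegral_inv_ratio_le hQ θ m))
  filter_upwards [h] with p hp h0
  simp [h0] at hp

lemma ae_goodOrbit (hQ : IsCPDist Q) (θ : ℝ) : ∀ᵐ p ∂Q, GoodOrbit θ p :=
  hQ.ae_orbit (ae_all_iff.2 fun m => ae_ratio_ne_zero hQ θ m)

lemma sq_log_le {r : ℝ≥0∞} (hr : r ≤ 1) :
    ENNReal.ofReal ((Real.log r.toReal) ^ 2) ≤ 2 * r⁻¹ := by
  by_cases h0 : r = 0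
  · simp [h0, ENNReal.mul_top]
  have hrt : r ≠ ∞ := ne_top_of_le_ne_top ENNReal.one_ne_top hr
  have hpos : 0 < r.toReal := ENNReal.toReal_pos h0 hrt
  have hle : r.toReal ≤ 1 := ENNReal.toReal_le_of_le_ofReal zero_le_one (by simpa using hr)
  have h1 := Real.quadratic_le_exp_of_nonneg (x := -Real.log r.toReal)
    (by have := Real.log_nonpos hpos.le hle; linarith)
  rw [Real.exp_neg, Real.exp_log hpos] at h1
  have h2 : (Real.log r.toReal) ^ 2 ≤ 2 * r.toReal⁻¹ := by
    have := Real.log_nonpos hpos.le hle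
    nlinarith
  refine (ENNReal.ofReal_le_ofReal h2).trans ?_
  rw [ENNReal.ofReal_mul (by norm_num), ENNReal.ofReal_inv_of_pos hpos, ENNReal.ofReal_toReal hrt]
  simp

lemma lintegral_sq_info_le (hQ : IsCPDist Q) (θ : ℝ) (m : ℕ) :
    ∫⁻ p, ENNReal.ofReal ((info θ m p) ^ 2) ∂Q ≤ 2 * ratioBound := by
  calc _ ≤ ∫⁻ p, 2 * (ratio θ 1 m p)⁻¹ ∂Q := lintegral_mono fun p => by
        simp only [info, neg_sq]
        exact sq_log_le (ratio_le_one θ 1 m p)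
    _ = 2 * ∫⁻ p, (ratio θ 1 m p)⁻¹ ∂Q := lintegral_const_mul _ (measurable_ratio θ 1 m).inv
    _ ≤ _ := mul_le_mul_right (lintegral_inv_ratio_le hQ θ m) _

/-- Fatou's lemma bounds the reciprocal of the limiting ratio. -/
lemma lintegral_inv_limRatio_le (hQ : IsCPDist Q) (θ : ℝ)
    (hl : ∀ᵐ p ∂Q, Tendsto (fun m => ratio θ 1 m p) atTop (nhds (limRatio θ p))) :
    ∫⁻ p, (limRatio θ p)⁻¹ ∂Q ≤ ratioBound := by
  calc _ = ∫⁻ p, liminf (fun m => (ratio θ 1 m p)⁻¹) atTop ∂Q := lintegral_congr_ae (by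
        filter_upwards [hl] with p hp
        exact (tendsto_inv_iff.2 hp).liminf_eq.symm)
    _ ≤ liminf (fun m => ∫⁻ p, (ratio θ 1 m p)⁻¹ ∂Q) atTop :=
        lintegral_liminf_le fun m => (measurable_ratio θ 1 m).inv
    _ ≤ _ := liminf_le_of_le (h := fun b hb => by
        obtain ⟨m, hm⟩ := hb.exists
        exact hm.trans (lintegral_inv_ratio_le hQ θ m))

lemma ae_limRatio_ne_zero (hQ : IsCPDist Q) (θ : ℝ)
    (hl : ∀ᵐ p ∂Q, Tendsto (fun m => ratio θ 1 m p) atTop (nhds (limRatio θ p))) :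
    ∀ᵐ p ∂Q, limRatio θ p ≠ 0 := by
  have h := ae_lt_top (measurable_limRatio θ).inv
    (ne_top_of_le_ne_top ratioBound_ne_top (lintegral_inv_limRatio_le hQ θ hl))
  filter_upwards [h] with p hp h0
  simp [h0] at hp

lemma memLp_two_of_sq {f : ProbabilityMeasure (Fin 2 → ℝ) × (Fin 2 → ℝ) → ℝ} (hf : Measurable f)
    (h : ∫⁻ p, ENNReal.ofReal ((f p) ^ 2) ∂Q ≤ 2 * ratioBound) : MemLp f 2 Q := by
  rw [memLp_two_iff_integrable_sq hf.aestronglyMeasurable]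
  refine ⟨(hf.pow_const 2).aestronglyMeasurable, ?_⟩
  rw [hasFiniteIntegral_iff_ofReal (Eventually.of_forall fun p => sq_nonneg _)]
  exact h.trans_lt (ENNReal.mul_lt_top (by simp) ratioBound_ne_top.lt_top)

lemma integrable_info (hQ : IsCPDist Q) (θ : ℝ) (m : ℕ) : Integrable (info θ m) Q :=
  have := hQ.1
  (memLp_two_of_sq (measurable_info θ m) (lintegral_sq_info_le hQ θ m)).integrable (by norm_num)

lemma integrable_limInfo (hQ : IsCPDist Q) (θ : ℝ)
    (hl : ∀ᵐ p ∂Q, Tendsto (fun m => ratio θ 1 m p) atTop (nhds (limRatio θ p))) :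
    Integrable (limInfo θ) Q := by
  have := hQ.1
  refine (memLp_two_of_sq (measurable_limInfo θ) ?_).integrable (by norm_num)
  calc _ ≤ ∫⁻ p, 2 * (limRatio θ p)⁻¹ ∂Q := lintegral_mono fun p => by
        simp only [limInfo, neg_sq]
        exact sq_log_le (limRatio_le_one θ p)
    _ = 2 * ∫⁻ p, (limRatio θ p)⁻¹ ∂Q := lintegral_const_mul _ (measurable_limRatio θ).inv
    _ ≤ _ := mul_le_mul_right (lintegral_inv_limRatio_le hQ θ hl) _

lemma tendsto_info (hQ : IsCPDist Q) (θ : ℝ)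
    (hl : ∀ᵐ p ∂Q, Tendsto (fun m => ratio θ 1 m p) atTop (nhds (limRatio θ p))) :
    ∀ᵐ p ∂Q, Tendsto (fun m => info θ m p) atTop (nhds (limInfo θ p)) := by
  filter_upwards [hl, ae_limRatio_ne_zero hQ θ hl] with p hp h0
  have hne : limRatio θ p ≠ ∞ := ne_top_of_le_ne_top ENNReal.one_ne_top (limRatio_le_one θ p)
  exact (((ENNReal.tendsto_toReal hne).comp hp).log (ENNReal.toReal_ne_zero.2 ⟨h0, hne⟩)).neg

lemma unifIntegrable_info (hQ : IsCPDist Q) (θ : ℝ) : UnifIntegrable (info θ) 1 Q := by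
  have := hQ.1
  refine unifIntegrable_of le_rfl ENNReal.one_ne_top
    (fun m => (measurable_info θ m).aestronglyMeasurable) fun ε hε => ?_
  -- the tail above level `C` is at most `2 * ratioBound / C`
  set B : ℝ := (2 * ratioBound).toReal with hB
  have hBt : 2 * ratioBound ≠ ∞ := ENNReal.mul_ne_top (by simp) ratioBound_ne_top
  have hB0 : 0 ≤ B := ENNReal.toReal_nonneg
  have hC0 : 0 < B / ε + 1 := by positivity
  refine ⟨(B / ε + 1).toNNReal, fun m => ?_⟩
  rw [eLpNorm_one_eq_lintegral_enorm]
  calc _ ≤ ∫⁻ p, ENNReal.ofReal (B / ε + 1)⁻¹ * ENNReal.ofReal ((info θ m p) ^ 2) ∂Q :=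
        lintegral_mono fun p => by
          by_cases hp : p ∈ {x | (B / ε + 1).toNNReal ≤ ‖info θ m x‖₊}
          · rw [indicator_of_mem hp, ← ENNReal.ofReal_mul (by positivity), Real.enorm_eq_ofReal_abs]
            refine ENNReal.ofReal_le_ofReal ?_
            have hp' : B / ε + 1 ≤ |info θ m p| := Real.toNNReal_le_iff_le_coe.1 hp
            rw [inv_mul_eq_div, le_div_iff₀ hC0, ← sq_abs, sq]
            exact mul_le_mul_of_nonneg_left hp' (abs_nonneg _)
          · rw [indicator_of_notMem hp]
            simp
    _ = ENNReal.ofReal (B / ε + 1)⁻¹ * ∫⁻ p, ENNReal.ofReal ((info θ m p) ^ 2) ∂Q :=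
        lintegral_const_mul _ ((measurable_info θ m).pow_const 2).ennreal_ofReal
    _ ≤ ENNReal.ofReal (B / ε + 1)⁻¹ * ENNReal.ofReal B := by
        rw [hB, ENNReal.ofReal_toReal hBt]
        exact mul_le_mul_right (lintegral_sq_info_le hQ θ m) _
    _ ≤ ENNReal.ofReal ε := by
        rw [← ENNReal.ofReal_mul (by positivity)]
        refine ENNReal.ofReal_le_ofReal ?_
        rw [inv_mul_le_iff₀ hC0]
        have : B / ε * ε = B := div_mul_cancel₀ _ hε.ne'
        nlinarith

lemma tendsto_L1_info (hQ : IsCPDist Q) (θ : ℝ)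
    (hl : ∀ᵐ p ∂Q, Tendsto (fun m => ratio θ 1 m p) atTop (nhds (limRatio θ p))) :
    Tendsto (fun m => ∫ p, |info θ m p - limInfo θ p| ∂Q) atTop (nhds 0) := by
  have := hQ.1
  have h := tendsto_Lp_finite_of_tendsto_ae le_rfl ENNReal.one_ne_top
    (fun m => (measurable_info θ m).aestronglyMeasurable)
    (memLp_one_iff_integrable.2 (integrable_limInfo hQ θ hl)) (unifIntegrable_info hQ θ)
    (tendsto_info hQ θ hl)
  have h2 := (ENNReal.tendsto_toReal ENNReal.zero_ne_top).comp h
  refine h2.congr fun m => ?_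
  simp only [Function.comp, eLpNorm_one_eq_lintegral_enorm]
  rw [integral_eq_lintegral_of_nonneg_ae (f := fun p => |info θ m p - limInfo θ p|)
    (Eventually.of_forall fun _ => abs_nonneg _) ((measurable_info θ m).sub (measurable_limInfo θ)).abs.aestronglyMeasurable]
  simp only [Real.enorm_eq_ofReal_abs, Pi.sub_apply]

/-! ### Disintegration over the projection -/

/-- The disintegration of `μ` over `projDir θ`, as a Markov kernel. -/
def fiberKernel (θ : ℝ) (μ : Measure (Fin 2 → ℝ)) [IsFiniteMeasure μ] :
    ProbabilityTheory.Kernel ℝ (Fin 2 → ℝ) :=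
  ProbabilityTheory.condDistrib id (projDir θ) μ

instance (θ : ℝ) (μ : Measure (Fin 2 → ℝ)) [IsFiniteMeasure μ] :
    ProbabilityTheory.IsMarkovKernel (fiberKernel θ μ) := by
  unfold fiberKernel; infer_instance

section
variable (θ : ℝ) (μ : Measure (Fin 2 → ℝ)) [IsProbabilityMeasure μ]

lemma compProd_fiberKernel :
    (μ.map (projDir θ)).compProd (fiberKernel θ μ) = μ.map fun z => (projDir θ z, z) :=
  ProbabilityTheory.compProd_map_condDistrib aemeasurable_id

lemma measurable_projDir_prodMk : Measurable fun z => (projDir θ z, z) :=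
  (measurable_projDir θ).prodMk measurable_id

lemma lintegral_fiberKernel {s : Set ℝ} (hs : MeasurableSet s) {E : Set (Fin 2 → ℝ)}
    (hE : MeasurableSet E) :
    ∫⁻ y in s, fiberKernel θ μ y E ∂(μ.map (projDir θ)) = μ (projDir θ ⁻¹' s ∩ E) := by
  rw [← Measure.compProd_apply_prod hs hE, compProd_fiberKernel,
    Measure.map_apply (measurable_projDir_prodMk θ) (hs.prod hE)]
  rfl

/-- Almost every fiber measure lives on its fiber and inherits the almost sure properties of `μ`. -/
lemma ae_fiberKernel {P : (Fin 2 → ℝ) → Prop} (h : ∀ᵐ x ∂μ, P x) :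
    ∀ᵐ y ∂(μ.map (projDir θ)), ∀ᵐ z ∂(fiberKernel θ μ y), projDir θ z = y ∧ P z := by
  refine Measure.ae_ae_of_ae_compProd (p := fun w => projDir θ w.2 = w.1 ∧ P w.2) ?_
  rw [compProd_fiberKernel]
  have h1 : ∀ᵐ w ∂(μ.map fun z => (projDir θ z, z)), projDir θ w.2 = w.1 := by
    refine (ae_map_iff (p := fun w : ℝ × (Fin 2 → ℝ) => projDir θ w.2 = w.1)
      (measurable_projDir_prodMk θ).aemeasurable
      (measurableSet_eq_fun ((measurable_projDir θ).comp measurable_snd) measurable_fst)).2 ?_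
    exact Eventually.of_forall fun _ => rfl
  have hmp : MeasurePreserving Prod.snd (μ.map fun z => (projDir θ z, z)) μ :=
    ⟨measurable_snd, by
      rw [Measure.map_map measurable_snd (measurable_projDir_prodMk θ)]
      exact Measure.map_id⟩
  filter_upwards [h1, hmp.quasiMeasurePreserving.ae h] with w hw1 hw2 using ⟨hw1, hw2⟩

lemma isDisint_fiberKernel : IsDisint μ θ fun y => fiberKernel θ μ y := by
  refine ⟨?_, fun E hE => ?_⟩
  · filter_upwards [ae_fiberKernel θ μ (P := fun _ => True) (by simp)] with y hy
    refine ⟨inferInstance, ?_⟩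
    exact ae_iff.1 (hy.mono fun z hz => hz.1)
  · have := lintegral_fiberKernel θ μ MeasurableSet.univ hE
    rw [Measure.restrict_univ] at this
    rw [this, preimage_univ, univ_inter]

/-- Besicovitch differentiation: the conditional mass of `E` on the fiber through `x` is the limit
of its conditional masses on thin strips around this fiber. -/
lemma ae_tendsto_fiberKernel {E : Set (Fin 2 → ℝ)} (hE : MeasurableSet E) :
    ∀ᵐ x ∂μ, Tendsto (fun m => μ {z | z ∈ E ∧ |projDir θ z - projDir θ x| ≤ rad m} /
      μ {z | |projDir θ z - projDir θ x| ≤ rad m}) atTop (nhds (fiberKernel θ μ (projDir θ x) E)) := by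
  have hπ := measurable_projDir θ
  have hρ : (μ.restrict E).map (projDir θ)
      = (μ.map (projDir θ)).withDensity fun y => fiberKernel θ μ y E := by
    ext s hs
    rw [withDensity_apply _ hs, lintegral_fiberKernel θ μ hs hE, Measure.map_apply hπ hs,
      Measure.restrict_apply (hπ hs)]
  have h1 := Besicovitch.ae_tendsto_rnDeriv ((μ.restrict E).map (projDir θ)) (μ.map (projDir θ))
  have h2 := Measure.rnDeriv_withDensity (μ.map (projDir θ))
    (ProbabilityTheory.Kernel.measurable_coe (fiberKernel θ μ) hE)
  rw [← hρ] at h2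
  filter_upwards [ae_of_ae_map hπ.aemeasurable h1, ae_of_ae_map hπ.aemeasurable h2] with x hx1 hx2
  rw [hx2] at hx1
  refine (hx1.comp tendsto_rad).congr fun m => ?_
  simp only [Function.comp]
  rw [Measure.map_apply hπ Metric.isClosed_closedBall.measurableSet,
    Measure.map_apply hπ Metric.isClosed_closedBall.measurableSet,
    Measure.restrict_apply (hπ Metric.isClosed_closedBall.measurableSet)]
  congr 2
  ext z
  simp [Real.dist_eq, and_comm]

end

lemma measurableSet_unitCube : MeasurableSet (unitCube 2) := by
  have : unitCube 2 = dcell 0 0 := (dcell_zero_of_mem (fun i => by simp)).symm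
  rw [this]
  exact measurableSet_dcell 0 0

lemma stripMass_zero {θ r : ℝ} {μ : ProbabilityMeasure (Fin 2 → ℝ)} {x : Fin 2 → ℝ}
    (hμ : (μ : Measure (Fin 2 → ℝ)) (unitCube 2) = 1) (hx : x ∈ unitCube 2) :
    stripMass θ 0 r (μ, x) = (μ : Measure (Fin 2 → ℝ)) {z | |projDir θ z - projDir θ x| ≤ r} := by
  have hcube := (prob_compl_eq_zero_iff measurableSet_unitCube).2 hμ
  change (μ : Measure (Fin 2 → ℝ)) (strip θ 0 r x) = _
  have : strip θ 0 r x = {z | |projDir θ z - projDir θ x| ≤ r} ∩ unitCube 2 := by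
    rw [← dcell_zero_of_mem hx]
    ext z
    exact and_comm
  rw [this]
  exact measure_inter_conull hcube

lemma ae_mem_unitCube {μ : ProbabilityMeasure (Fin 2 → ℝ)}
    (hμ : (μ : Measure (Fin 2 → ℝ)) (unitCube 2) = 1) :
    ∀ᵐ x ∂(μ : Measure (Fin 2 → ℝ)), x ∈ unitCube 2 :=
  (prob_compl_eq_zero_iff measurableSet_unitCube).2 hμ

/-- The strip ratios converge to the masses of dyadic cells for the fiber measures. -/
lemma ae_tendsto_ratio (θ : ℝ) (μ : ProbabilityMeasure (Fin 2 → ℝ))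
    (hμ : (μ : Measure (Fin 2 → ℝ)) (unitCube 2) = 1) :
    ∀ᵐ x ∂(μ : Measure (Fin 2 → ℝ)), ∀ n, Tendsto (fun m => ratio θ n m (μ, x)) atTop
      (nhds (fiberKernel θ (μ : Measure (Fin 2 → ℝ)) (projDir θ x) (dcell n x))) := by
  have h : ∀ᵐ x ∂(μ : Measure (Fin 2 → ℝ)), ∀ (n : ℕ) (j : Fin 2 → ℤ), _ :=
    ae_all_iff.2 fun n => ae_all_iff.2 fun j =>
      ae_tendsto_fiberKernel θ (μ : Measure (Fin 2 → ℝ))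
        (measurable_dindex n (measurableSet_singleton j))
  filter_upwards [h, ae_mem_unitCube hμ] with x hx hc n
  have := hx n (dindex n x)
  have e : dindex n ⁻¹' {dindex n x} = dcell n x := by rw [dcell_eq]; rfl
  rw [e] at this
  refine this.congr fun m => ?_
  unfold ratio
  rw [stripMass_zero hμ hc]
  rfl

lemma ae_tendsto_limRatio (hQ : IsCPDist Q) (θ : ℝ) :
    ∀ᵐ p ∂Q, Tendsto (fun m => ratio θ 1 m p) atTop (nhds (limRatio θ p)) := by
  refine hQ.ae_of_ae_ae (measurableSet_tendsto_fun (fun m => measurable_ratio θ 1 m)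
    (measurable_limRatio θ)) ?_
  filter_upwards [hQ.2.1] with p hp
  filter_upwards [ae_tendsto_ratio θ p.1 hp.1] with x hx
  have h1 := hx 1
  have e : limRatio θ (p.1, x) = _ := h1.limsup_eq
  rw [e]
  exact h1

/-- The mass of a dyadic cell for the fiber measure is a multiplicative cocycle. -/
lemma ae_fiberKernel_dcell (hQ : IsCPDist Q) (θ : ℝ) :
    ∀ᵐ p ∂Q, ∀ᵐ x ∂(p.1 : Measure (Fin 2 → ℝ)), ∀ n,
      fiberKernel θ (p.1 : Measure (Fin 2 → ℝ)) (projDir θ x) (dcell n x)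
        = ∏ k ∈ Finset.range n, limRatio θ (CPmag^[k] (p.1, x)) := by
  filter_upwards [hQ.2.1, hQ.ae_ae (ae_goodOrbit hQ θ),
    hQ.ae_ae (hQ.ae_orbit (ae_tendsto_limRatio hQ θ))] with p hp hg hl
  filter_upwards [ae_tendsto_ratio θ p.1 hp.1, hg, hl] with x hx hgx hlx n
  exact tendsto_nhds_unique (hx n) (hgx.tendsto_ratio hlx n)

/-! ### The entropy of the fiber measures -/

/-- Maker's ergodic lemma, in the weak form of an identification of limits: replacing `g` by
approximations `f m → g` in `L¹` along the orbit does not change the ergodic averages. -/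
lemma maker_limit_eq {Ω : Type*} [MeasurableSpace Ω] {Q : Measure Ω} [IsProbabilityMeasure Q]
    {T : Ω → Ω} (hT : MeasurePreserving T Q Q) {f : ℕ → Ω → ℝ} {g : Ω → ℝ}
    (hfi : ∀ m, Integrable (f m) Q) (hgi : Integrable g Q)
    (hfg : Tendsto (fun m => ∫ p, |f m p - g p| ∂Q) atTop (nhds 0)) {h L : ℝ}
    (hh : ∀ᵐ p ∂Q, Tendsto (fun n : ℕ => birkhoffSum T g n p / n) atTop (nhds h))
    (hL : ∀ᵐ p ∂Q, Tendsto (fun n : ℕ => (∑ k ∈ Finset.range n, f (n - k) (T^[k] p)) / n) atTop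
      (nhds L)) : L = h := by
  set G : ℕ → Ω → ℝ := fun n p => |∑ k ∈ Finset.range n, (f (n - k) (T^[k] p) - g (T^[k] p))| / n
  have hdi : ∀ m, Integrable (fun p => f m p - g p) Q := fun m => (hfi m).sub hgi
  have hdk : ∀ m k, Integrable (fun p => f m (T^[k] p) - g (T^[k] p)) Q := fun m k =>
    (hT.iterate k).integrable_comp_of_integrable (hdi m)
  have hGi : ∀ n, Integrable (G n) Q := fun n =>
    ((integrable_finsetSum _ fun k _ => hdk (n - k) k).abs).div_const _
  have hG0 : ∀ n p, 0 ≤ G n p := fun n p => by positivity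
  have hlim : ∀ᵐ p ∂Q, Tendsto (fun n => G n p) atTop (nhds |L - h|) := by
    filter_upwards [hh, hL] with p h1 h2
    refine ((h2.sub h1).abs).congr fun n => ?_
    simp only [G, birkhoffSum, Finset.sum_sub_distrib]
    rw [← sub_div, abs_div, Nat.abs_cast]
  have hGint : ∀ n, ∫ p, G n p ∂Q ≤
      (n : ℝ)⁻¹ * ∑ j ∈ Finset.range n, ∫ p, |f (j + 1) p - g p| ∂Q := by
    intro n
    have hk : ∀ m k, ∫ p, |f m (T^[k] p) - g (T^[k] p)| ∂Q = ∫ p, |f m p - g p| ∂Q := by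
      intro m k
      have hm := hT.iterate k
      conv_rhs => rw [← hm.map_eq]
      rw [integral_map hm.measurable.aemeasurable]
      rw [hm.map_eq]
      exact (hdi m).abs.aestronglyMeasurable
    calc ∫ p, G n p ∂Q ≤ ∫ p, (n : ℝ)⁻¹ * ∑ k ∈ Finset.range n,
          |f (n - k) (T^[k] p) - g (T^[k] p)| ∂Q := by
          refine integral_mono (hGi n)
            ((integrable_finsetSum _ fun k _ => (hdk (n - k) k).abs).const_mul _) fun p => ?_
          simp only [G]
          rw [div_eq_inv_mul]
          exact mul_le_mul_of_nonneg_left (Finset.abs_sum_le_sum_abs _ _) (by positivity)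
      _ = (n : ℝ)⁻¹ * ∑ k ∈ Finset.range n, ∫ p, |f (n - k) p - g p| ∂Q := by
          rw [integral_const_mul, integral_finsetSum _ fun k _ => (hdk (n - k) k).abs]
          simp_rw [hk]
      _ = _ := by
          rw [← Finset.sum_range_reflect (fun j => ∫ p, |f (j + 1) p - g p| ∂Q) n]
          congr 1
          refine Finset.sum_congr rfl fun k hk => ?_
          have : n - 1 - k + 1 = n - k := by have := Finset.mem_range.1 hk; omega
          simp only [this]
  have hces := ((tendsto_add_atTop_iff_nat 1).2 hfg).cesaro
  have hG : Tendsto (fun n => ∫ p, G n p ∂Q) atTop (nhds 0) :=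
    squeeze_zero (fun n => integral_nonneg (hG0 n)) hGint hces
  have hfatou : ENNReal.ofReal |L - h| ≤ 0 := by
    calc ENNReal.ofReal |L - h| = ∫⁻ p, liminf (fun n => ENNReal.ofReal (G n p)) atTop ∂Q := by
          rw [lintegral_congr_ae (g := fun _ => ENNReal.ofReal |L - h|)]
          · simp
          · filter_upwards [hlim] with p hp
            exact ((ENNReal.continuous_ofReal.tendsto _).comp hp).liminf_eq
      _ ≤ liminf (fun n => ∫⁻ p, ENNReal.ofReal (G n p) ∂Q) atTop :=
          lintegral_liminf_le' fun n => (hGi n).aestronglyMeasurable.aemeasurable.ennreal_ofReal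
      _ = 0 := by
          have : Tendsto (fun n => ∫⁻ p, ENNReal.ofReal (G n p) ∂Q) atTop (nhds 0) := by
            have h2 := (ENNReal.continuous_ofReal.tendsto 0).comp hG
            rw [ENNReal.ofReal_zero] at h2
            refine h2.congr fun n => ?_
            exact ofReal_integral_eq_lintegral_ofReal (hGi n) (Eventually.of_forall (hG0 n))
          exact this.liminf_eq
  have h0 : |L - h| ≤ 0 := ENNReal.ofReal_eq_zero.1 (le_antisymm hfatou bot_le)
  exact sub_eq_zero.1 (abs_nonpos_iff.1 h0)

lemma tendsto_log_scaled {c : ℝ} (hc : 0 < c) :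
    Tendsto (fun n : ℕ => Real.log (c * (2⁻¹ : ℝ) ^ n) / n) atTop (nhds (-Real.log 2)) := by
  have h1 : Tendsto (fun n : ℕ => Real.log c / n - Real.log 2) atTop (nhds (0 - Real.log 2)) :=
    (tendsto_const_div_atTop_nhds_zero_nat _).sub_const _
  rw [zero_sub] at h1
  refine h1.congr' ?_
  filter_upwards [eventually_ne_atTop 0] with n hn
  have : (n : ℝ) ≠ 0 := by exact_mod_cast hn
  rw [Real.log_mul hc.ne' (by positivity), Real.log_pow, Real.log_inv]
  field_simp
  ring

lemma tendsto_log_ball {X : Type*} [PseudoMetricSpace X] [MeasurableSpace X] {ν : Measure X}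
    {y : X} {β c : ℝ} (hc : 0 < c)
    (h : Tendsto (fun r : ℝ => Real.log (ν (Metric.ball y r)).toReal / Real.log r)
      (nhdsWithin 0 (Ioi 0)) (nhds β)) :
    Tendsto (fun n : ℕ => Real.log (ν (Metric.ball y (c * (2⁻¹ : ℝ) ^ n))).toReal / n) atTop
      (nhds (-(β * Real.log 2))) := by
  have hc0 : Tendsto (fun n : ℕ => c * (2⁻¹ : ℝ) ^ n) atTop (nhdsWithin 0 (Ioi 0)) := by
    refine tendsto_nhdsWithin_iff.2 ⟨?_, Eventually.of_forall fun n => ?_⟩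
    · have := (tendsto_pow_atTop_nhds_zero_of_lt_one (r := (2⁻¹ : ℝ)) (by norm_num)
        (by norm_num)).const_mul c
      rwa [mul_zero] at this
    · exact mem_Ioi.2 (by positivity)
  have h1 := (h.comp hc0).mul (tendsto_log_scaled hc)
  rw [mul_neg] at h1
  have hne : -Real.log 2 ≠ 0 := neg_ne_zero.2 (Real.log_pos one_lt_two).ne'
  refine h1.congr' ?_
  filter_upwards [(tendsto_log_scaled hc).eventually_ne hne] with n hn
  have : Real.log (c * (2⁻¹ : ℝ) ^ n) ≠ 0 := fun h0 => hn (by rw [h0, zero_div])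
  simp only [Function.comp]
  rw [div_mul_div_comm, mul_comm (Real.log (c * (2⁻¹ : ℝ) ^ n)) (n : ℝ), mul_div_mul_right _ _ this]

lemma tendsto_log_closedBall {X : Type*} [PseudoMetricSpace X] [MeasurableSpace X] {ν : Measure X}
    [IsFiniteMeasure ν] {y : X} {β : ℝ}
    (h : Tendsto (fun r : ℝ => Real.log (ν (Metric.ball y r)).toReal / Real.log r)
      (nhdsWithin 0 (Ioi 0)) (nhds β))
    (hpos : ∀ n, ν (Metric.closedBall y (rad n)) ≠ 0) :
    Tendsto (fun n : ℕ => -Real.log (ν (Metric.closedBall y (rad n))).toReal / n) atTop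
      (nhds (β * Real.log 2)) := by
  have h4 := (tendsto_log_ball (c := 4) (by norm_num) h).neg
  have h8 := (tendsto_log_ball (c := 8) (by norm_num) h).neg
  rw [neg_neg] at h4 h8
  refine tendsto_of_tendsto_of_tendsto_of_le_of_le h8 h4 (fun n => ?_) fun n => ?_
  · have hle : ν (Metric.closedBall y (rad n)) ≤ ν (Metric.ball y (8 * (2⁻¹ : ℝ) ^ n)) :=
      measure_mono (Metric.closedBall_subset_ball (by
        unfold rad
        have : (0 : ℝ) < (2⁻¹ : ℝ) ^ n := by positivity
        linarith))
    have := Real.log_le_log (ENNReal.toReal_pos (hpos n) (measure_ne_top _ _))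
      (ENNReal.toReal_mono (measure_ne_top _ _) hle)
    simp only
    rw [neg_div]
    exact neg_le_neg (div_le_div_of_nonneg_right this (by positivity))
  · have h1 : ν (Metric.ball y (4 * (2⁻¹ : ℝ) ^ n)) ≠ 0 := fun h0 => by
      refine hpos (n + 1) (measure_mono_null (Metric.closedBall_subset_ball ?_) h0)
      rw [rad_succ]
      exact half_lt_self (rad_pos n)
    have := Real.log_le_log (ENNReal.toReal_pos h1 (measure_ne_top _ _))
      (ENNReal.toReal_mono (measure_ne_top _ _) (measure_mono (μ := ν)
        (Metric.ball_subset_closedBall : Metric.ball y (4 * (2⁻¹ : ℝ) ^ n) ⊆ _)))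
    simp only
    rw [neg_div]
    exact neg_le_neg (div_le_div_of_nonneg_right this (by positivity))

lemma ae_tendsto_log_dcell (hQ : IsCPDist Q) (herg : CPErgodic Q) (θ : ℝ) :
    ∀ᵐ p ∂Q, Tendsto (fun n : ℕ => -Real.log (stripMass θ n (rad n) p).toReal / n) atTop
      (nhds (∫ p, info θ 0 p ∂Q)) := by
  have := hQ.1
  filter_upwards [ae_tendsto_birkhoff hQ.measurePreserving herg (measurable_info θ 0)
    (integrable_info hQ θ 0), ae_goodOrbit hQ θ, hQ.ae_orbit hQ.2.1] with p hp hg hc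
  refine hp.congr fun n => ?_
  rw [(hg.log_dcell (fun k => by rw [dcell_zero_of_mem (hc k).2]; exact (hc k).1) n).2]
  rfl

/-- The dimension of `Q` is the mean of the dyadic information. -/
lemma integral_info_zero (hQ : IsCPDist Q) (herg : CPErgodic Q) (θ : ℝ) {α : ℝ}
    (hα : ∀ᵐ p ∂Q, ExactDim (p.1 : Measure (Fin 2 → ℝ)) α) :
    ∫ p, info θ 0 p ∂Q = α * Real.log 2 := by
  have := hQ.1
  obtain ⟨p, hp1, hp2⟩ := (hα.and (hQ.ae_ae (ae_tendsto_log_dcell hQ herg θ))).exists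
  have hdim := exactDim_of_dyadic (p.1 : Measure (Fin 2 → ℝ)) _ (hp2.mono fun x hx => by
    refine hx.congr fun n => ?_
    simp only [stripMass, strip_rad _ le_rfl]
    rfl)
  obtain ⟨x, hx1, hx2⟩ := (hp1.and hdim).exists
  have := tendsto_nhds_unique hx1 hx2
  rw [this, div_mul_cancel₀ _ (Real.log_pos one_lt_two).ne']

lemma ae_tendsto_log_strip (hQ : IsCPDist Q) (θ : ℝ) {β : ℝ}
    (hβ : ∀ᵐ p ∂Q, ExactDim ((p.1 : Measure (Fin 2 → ℝ)).map (projDir θ)) β) :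
    ∀ᵐ p ∂Q, Tendsto (fun n : ℕ => -Real.log (stripMass θ 0 (rad n) p).toReal / n) atTop
      (nhds (β * Real.log 2)) := by
  have hm : ∀ n : ℕ, Measurable fun p => -Real.log (stripMass θ 0 (rad n) p).toReal / (n : ℝ) :=
    fun n => (Real.measurable_log.comp (measurable_stripMass θ 0 _).ennreal_toReal).neg.div_const _
  refine hQ.ae_of_ae_ae (measurableSet_tendsto_fun hm measurable_const) ?_
  filter_upwards [hβ, hQ.2.1, hQ.ae_ae (ae_goodOrbit hQ θ)] with p hp hc hg
  filter_upwards [ae_of_ae_map (measurable_projDir θ).aemeasurable hp, ae_mem_unitCube hc.1, hg]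
    with x hx hxc hgx
  have e : ∀ n, ((p.1 : Measure (Fin 2 → ℝ)).map (projDir θ))
      (Metric.closedBall (projDir θ x) (rad n)) = stripMass θ 0 (rad n) (p.1, x) := fun n => by
    rw [stripMass_zero hc.1 hxc, Measure.map_apply (measurable_projDir θ)
      Metric.isClosed_closedBall.measurableSet]
    rfl
  have : IsProbabilityMeasure ((p.1 : Measure (Fin 2 → ℝ)).map (projDir θ)) :=
    Measure.isProbabilityMeasure_map (measurable_projDir θ).aemeasurable
  have h := tendsto_log_closedBall hx fun n h0 => by
    rw [e] at h0
    exact stripMass_ne_zero_of_ratio (hgx 0 n)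
      (measure_mono_null (strip_subset θ (Nat.zero_le 1) _ _) h0)
  simpa only [e] using h

/-- The mean conditional information is the drop of dimension under the projection. -/
lemma integral_limInfo (hQ : IsCPDist Q) (herg : CPErgodic Q) (θ : ℝ) {α β : ℝ}
    (hα : ∀ᵐ p ∂Q, ExactDim (p.1 : Measure (Fin 2 → ℝ)) α)
    (hβ : ∀ᵐ p ∂Q, ExactDim ((p.1 : Measure (Fin 2 → ℝ)).map (projDir θ)) β) :
    ∫ p, limInfo θ p ∂Q = (α - β) * Real.log 2 := by
  have := hQ.1
  have hl := ae_tendsto_limRatio hQ θ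
  refine (maker_limit_eq hQ.measurePreserving (integrable_info hQ θ) (integrable_limInfo hQ θ hl)
    (tendsto_L1_info hQ θ hl) (ae_tendsto_birkhoff hQ.measurePreserving herg
      (measurable_limInfo θ) (integrable_limInfo hQ θ hl)) ?_).symm
  have h1 := ae_tendsto_log_dcell hQ herg θ
  rw [integral_info_zero hQ herg θ hα] at h1
  filter_upwards [h1, ae_tendsto_log_strip hQ θ hβ, ae_goodOrbit hQ θ] with p hp1 hp2 hg
  rw [sub_mul]
  refine (hp1.sub hp2).congr fun n => ?_
  obtain ⟨hn, hlog⟩ := hg.log_ratio_diag n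
  have hs := stripMass_ne_zero_of_ratio hn
  have hs0 : stripMass θ 0 (rad n) p ≠ 0 := fun h0 =>
    hs (measure_mono_null (strip_subset θ (Nat.zero_le n) _ _) h0)
  rw [← hlog, ratio, ENNReal.toReal_div, Real.log_div
    (ENNReal.toReal_ne_zero.2 ⟨hs, stripMass_ne_top _ _ _ _⟩)
    (ENNReal.toReal_ne_zero.2 ⟨hs0, stripMass_ne_top _ _ _ _⟩)]
  ring

/-- Almost surely the fiber measures have the expected local dimension along dyadic cells. -/
lemma ae_tendsto_log_fiber (hQ : IsCPDist Q) (herg : CPErgodic Q) (θ : ℝ) :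
    ∀ᵐ p ∂Q, ∀ᵐ x ∂(p.1 : Measure (Fin 2 → ℝ)), Tendsto (fun n : ℕ => -Real.log
      ((fiberKernel θ (p.1 : Measure (Fin 2 → ℝ)) (projDir θ x)).real (dcell n x)) / n) atTop
      (nhds (∫ p, limInfo θ p ∂Q)) := by
  have := hQ.1
  have hl := ae_tendsto_limRatio hQ θ
  filter_upwards [ae_fiberKernel_dcell hQ θ,
    hQ.ae_ae (hQ.ae_orbit (ae_limRatio_ne_zero hQ θ hl)),
    hQ.ae_ae (ae_tendsto_birkhoff hQ.measurePreserving herg (measurable_limInfo θ)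
      (integrable_limInfo hQ θ hl))] with p hp h0 hb
  filter_upwards [hp, h0, hb] with x hx hx0 hbx
  refine hbx.congr fun n => ?_
  have hne : ∀ k, (limRatio θ (CPmag^[k] (p.1, x))).toReal ≠ 0 := fun k =>
    ENNReal.toReal_ne_zero.2
      ⟨hx0 k, ne_top_of_le_ne_top ENNReal.one_ne_top (limRatio_le_one θ _)⟩
  rw [measureReal_def, hx n, ENNReal.toReal_prod, Real.log_prod fun k _ => hne k,
    ← Finset.sum_neg_distrib]
  rfl

/-- if `dim πQ = dim Q - κ` with `κ > 0`, then for `Q`-a.e. `μ` and `μ`-a.e. `x`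
the conditional measure of `μ` on the fiber through `x` is exact dimensional of dimension `κ`. -/
theorem stmt11 (Q : Measure (ProbabilityMeasure (Fin 2 → ℝ) × (Fin 2 → ℝ)))
    (hQ : IsCPDist Q) (herg : CPErgodic Q) (θ : ℝ) (α β κ : ℝ) (hκ : 0 < κ)
    (hα : ∀ᵐ p ∂Q, ExactDim (p.1 : Measure (Fin 2 → ℝ)) α)
    (hβ : ∀ᵐ p ∂Q, ExactDim ((p.1 : Measure (Fin 2 → ℝ)).map (projDir θ)) β)
    (hβκ : β = α - κ) :
    ∀ᵐ p ∂Q, ∃ cond : ℝ → Measure (Fin 2 → ℝ),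
      IsDisint (p.1 : Measure (Fin 2 → ℝ)) θ cond ∧
        ∀ᵐ x ∂(p.1 : Measure (Fin 2 → ℝ)), ExactDim (cond (projDir θ x)) κ := by
  have h := ae_tendsto_log_fiber hQ herg θ
  rw [integral_limInfo hQ herg θ hα hβ, show α - β = κ by rw [hβκ]; ring] at h
  filter_upwards [h] with p hp
  refine ⟨fun y => fiberKernel θ (p.1 : Measure (Fin 2 → ℝ)) y, isDisint_fiberKernel θ _, ?_⟩
  have h1 := ae_fiberKernel θ (p.1 : Measure (Fin 2 → ℝ)) hp
  filter_upwards [ae_of_ae_map (measurable_projDir θ).aemeasurable h1] with x hx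
  have h2 := exactDim_of_dyadic (fiberKernel θ (p.1 : Measure (Fin 2 → ℝ)) (projDir θ x))
    (κ * Real.log 2) (hx.mono fun z hz => by
      have hz2 := hz.2
      rwa [hz.1] at hz2)
  rwa [mul_div_cancel_right₀ _ (Real.log_pos one_lt_two).ne'] at h2

end
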